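/- arXiv:2208.14540 — 4 statements merged into one kernel-verified Lean document; each statement's English description precedes it below -/
import Mathlib

section
/- Let (δ_{ij}) be an n×n symmetric matrix with zero diagonal and nonnegative entries, and fix d_e ≥ 1. Set A = (−½ δ_{ij}²) and B = H A H where H = I − (1/n) J is the centering matrix (J the all-ones matrix). Let ν₁ ≥ … ≥ νₙ be the eigenvalues of B; a classical-scaling (CS) embedding from (δ_{ij}) is any family p₁,…,pₙ ∈ ℝ^{d_e} with pᵢ = (√(ν₁⁺) u_{i,1},…,√(ν_{d_e}⁺) u_{i,d_e}) for a choice of orthonormal eigenvectors u₁,…,u_{d_e} of B for ν₁,…,ν_{d_e} (here a⁺ = max(a,0)). Assume ν_{d_e} ≥ 0. Then there exists C > 0, depending only on (δ_{ij}) and d_e, such that for every symmetric nonnegative matrix (δ̂_{ij}) with zero diagonal, with Â, B̂, and CS embedding (p̂ᵢ) defined analogously from (δ̂_{ij}), there exists a CS embedding (pᵢ) from (δ_{ij}) with: Σᵢ ‖pᵢ − p̂ᵢ‖² ≤ C n² ‖A − Â‖_F² if ν_{d_e} > 0, and Σᵢ ‖pᵢ − p̂ᵢ‖² ≤ C n²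 ‖A − Â‖_F if ν_{d_e} = 0, where ‖·‖_F is the Frobenius norm. -/
open Matrix
open scoped BigOperators

noncomputable section

namespace Stmt3

/-- `A = (−½ δᵢⱼ²)`. -/
def Amat {n : ℕ} (δ : Matrix (Fin n) (Fin n) ℝ) : Matrix (Fin n) (Fin n) ℝ :=
  Matrix.of fun i j => -(1 / 2 : ℝ) * δ i j ^ 2

/-- The centering matrix `H = I − J/n`. -/
def Hmat (n : ℕ) : Matrix (Fin n) (Fin n) ℝ :=
  1 - (n : ℝ)⁻¹ • Matrix.of fun _ _ => (1 : ℝ)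

/-- `B = H A H`. -/
def Bmat {n : ℕ} (δ : Matrix (Fin n) (Fin n) ℝ) : Matrix (Fin n) (Fin n) ℝ :=
  Hmat n * Amat δ * Hmat n

/-- The Frobenius norm. -/
def frob {n : ℕ} (M : Matrix (Fin n) (Fin n) ℝ) : ℝ :=
  Real.sqrt (∑ i, ∑ j, M i j ^ 2)

/-- `(ν, u)` is a full orthonormal eigendecomposition of `B = Bmat δ`, with eigenvalues
listed in decreasing order. -/
def IsEigenDecomp {n : ℕ} (δ : Matrix (Fin n) (Fin n) ℝ)
    (ν : Fin n → ℝ) (u : Fin n → Fin n → ℝ) : Prop :=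
  Antitone ν ∧ (∀ k l, ∑ i, u k i * u l i = if k = l then (1 : ℝ) else 0) ∧
    ∀ k, (Bmat δ).mulVec (u k) = ν k • u k

/-- `p` is a classical-scaling embedding of the dissimilarity matrix `δ` in dimension `de`:
`pᵢ = (√(ν₁⁺) u_{i,1}, …, √(ν_{de}⁺) u_{i,de})` for some orthonormal eigendecomposition
`(ν, u)` of `B` with decreasing eigenvalues. -/
def IsCSEmbedding {n : ℕ} (de : ℕ) (hden : de ≤ n) (δ : Matrix (Fin n) (Fin n) ℝ)
    (p : Fin n → EuclideanSpace ℝ (Fin de)) : Prop :=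
  ∃ (ν : Fin n → ℝ) (u : Fin n → Fin n → ℝ), IsEigenDecomp δ ν u ∧
    ∀ i k, p i k = Real.sqrt (max (ν (Fin.castLE hden k)) 0) * u (Fin.castLE hden k) i

/-- squared Frobenius norm -/
def fs {n : ℕ} (M : Matrix (Fin n) (Fin n) ℝ) : ℝ := ∑ i, ∑ j, M i j ^ 2

lemma fs_nonneg {n : ℕ} (M : Matrix (Fin n) (Fin n) ℝ) : 0 ≤ fs M :=
  Finset.sum_nonneg fun _ _ => Finset.sum_nonneg fun _ _ => sq_nonneg _

lemma fs_trace {n : ℕ} (M : Matrix (Fin n) (Fin n) ℝ) : fs M = trace (M * Mᵀ) := by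
  simp [fs, trace, Matrix.mul_apply, pow_two]

lemma fs_transpose {n : ℕ} (M : Matrix (Fin n) (Fin n) ℝ) : fs Mᵀ = fs M := by
  unfold fs
  rw [Finset.sum_comm]; rfl

lemma fs_mul_right {n : ℕ} (M Q : Matrix (Fin n) (Fin n) ℝ) (h : Q * Qᵀ = 1) :
    fs (M * Q) = fs M := by
  rw [fs_trace, fs_trace, transpose_mul]
  congr 1
  calc M * Q * (Qᵀ * Mᵀ) = M * (Q * Qᵀ) * Mᵀ := by simp only [Matrix.mul_assoc]
    _ = _ := by rw [h, Matrix.mul_one]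

lemma fs_mul_left {n : ℕ} (M Q : Matrix (Fin n) (Fin n) ℝ) (h : Qᵀ * Q = 1) :
    fs (Q * M) = fs M := by
  rw [← fs_transpose, transpose_mul, fs_mul_right, fs_transpose]
  simpa using h

lemma fs_mul_le {n : ℕ} (M N : Matrix (Fin n) (Fin n) ℝ) : fs (M * N) ≤ fs M * fs N := by
  have : fs M * fs N = ∑ i, ∑ j, (∑ k, M i k ^ 2) * (∑ k, N k j ^ 2) := by
    rw [← fs_transpose N]
    simp only [fs, Finset.sum_mul_sum, transpose_apply]
  rw [this]
  unfold fs
  refine Finset.sum_le_sum fun i _ => Finset.sum_le_sum fun j _ => ?_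
  rw [Matrix.mul_apply]
  exact Finset.sum_mul_sq_le_sq_mul_sq _ _ _

lemma fs_add_le {n : ℕ} (M N : Matrix (Fin n) (Fin n) ℝ) :
    fs (M + N) ≤ 2 * fs M + 2 * fs N := by
  simp only [fs, Finset.mul_sum, ← Finset.sum_add_distrib]
  refine Finset.sum_le_sum fun i _ => Finset.sum_le_sum fun j _ => ?_
  rw [Matrix.add_apply]
  nlinarith [sq_nonneg (M i j - N i j)]

/-- Hoffman-Wielandt core. -/
lemma hw {n : ℕ} (c : Matrix (Fin n) (Fin n) ℝ) (h1 : c * cᵀ = 1) (ν νh : Fin n → ℝ)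
    (hν : Antitone ν) (hνh : Antitone νh) :
    ∑ k, (ν k - νh k) ^ 2 ≤ ∑ k, ∑ l, c k l ^ 2 * (ν l - νh k) ^ 2 := by
  have h2 : cᵀ * c = 1 := mul_eq_one_comm.mp h1
  have hds : (Matrix.of fun k l => c k l ^ 2) ∈ doublyStochastic ℝ (Fin n) := by
    rw [mem_doublyStochastic_iff_sum]
    refine ⟨fun i j => sq_nonneg _, fun i => ?_, fun j => ?_⟩
    · have := congrFun (congrFun h1 i) i
      simpa [Matrix.mul_apply, pow_two] using this
    · have := congrFun (congrFun h2 j) j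
      simpa [Matrix.mul_apply, pow_two] using this
  obtain ⟨w, hw0, hw1, hw2⟩ := exists_eq_sum_perm_of_mem_doublyStochastic hds
  have hc : ∀ k l, c k l ^ 2 = ∑ σ : Equiv.Perm (Fin n), w σ * (if σ k = l then 1 else 0) := by
    intro k l
    have := congrFun (congrFun hw2 k) l
    simp only [Matrix.of_apply] at this
    rw [← this, Matrix.sum_apply]
    refine Finset.sum_congr rfl fun σ _ => ?_
    simp [Equiv.Perm.permMatrix, PEquiv.toMatrix_apply, eq_comm]
  have key : ∀ σ : Equiv.Perm (Fin n),
      ∑ k, (ν k - νh k) ^ 2 ≤ ∑ k, (ν (σ k) - νh k) ^ 2 := by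
    intro σ
    have hm : Monovary ν νh := hν.monovary hνh
    have h3 := hm.sum_comp_perm_mul_le_sum_mul (σ := σ)
    have h4 : ∑ k, ν (σ k) ^ 2 = ∑ k, ν k ^ 2 := Equiv.sum_comp σ (fun k => ν k ^ 2)
    have e1 : ∑ k, (ν k - νh k) ^ 2 = ∑ k, ν k ^ 2 + ∑ k, νh k ^ 2 - 2 * ∑ k, ν k * νh k := by
      rw [Finset.mul_sum, ← Finset.sum_add_distrib, ← Finset.sum_sub_distrib]
      exact Finset.sum_congr rfl fun k _ => by ring
    have e2 : ∑ k, (ν (σ k) - νh k) ^ 2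
        = ∑ k, ν (σ k) ^ 2 + ∑ k, νh k ^ 2 - 2 * ∑ k, ν (σ k) * νh k := by
      rw [Finset.mul_sum, ← Finset.sum_add_distrib, ← Finset.sum_sub_distrib]
      exact Finset.sum_congr rfl fun k _ => by ring
    rw [e1, e2, h4]; linarith
  calc ∑ k, (ν k - νh k) ^ 2 = ∑ σ, w σ * ∑ k, (ν k - νh k) ^ 2 := by
        rw [← Finset.sum_mul, hw1, one_mul]
    _ ≤ ∑ σ, w σ * ∑ k, (ν (σ k) - νh k) ^ 2 :=
        Finset.sum_le_sum fun σ _ => mul_le_mul_of_nonneg_left (key σ) (hw0 σ)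
    _ = _ := by
        simp only [hc, Finset.sum_mul, Finset.mul_sum]
        rw [Finset.sum_comm]
        refine Finset.sum_congr rfl fun k _ => ?_
        rw [Finset.sum_comm]
        refine Finset.sum_congr rfl fun σ _ => ?_
        simp

/-- Polar decomposition within the commutant of `diag ν`. -/
lemma polar {n : ℕ} (D Λ : Matrix (Fin n) (Fin n) ℝ) (hD : D * Λ = Λ * D)
    (hΛ : Λᵀ = Λ) (hS : fs (D * Dᵀ - 1) < 1) :
    ∃ Q : Matrix (Fin n) (Fin n) ℝ, Q * Qᵀ = 1 ∧ Q * Λ = Λ * Q ∧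
      fs (Q - D) ≤ fs (D * Dᵀ - 1) := by
  have hDt : Dᵀ * Λ = Λ * Dᵀ := by
    have := congrArg transpose hD
    rw [transpose_mul, transpose_mul, hΛ] at this
    exact this.symm
  set S := D * Dᵀ with hSdef
  have hSΛ : S * Λ = Λ * S := by
    rw [hSdef, Matrix.mul_assoc, hDt, ← Matrix.mul_assoc, hD, Matrix.mul_assoc]
  have hH : S.IsHermitian := by
    rw [hSdef]; simpa using isHermitian_mul_conjTranspose_self D
  obtain ⟨U, s, hU, hUS⟩ : ∃ (U : Matrix (Fin n) (Fin n) ℝ) (s : Fin n → ℝ),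
      U * Uᵀ = 1 ∧ S = U * diagonal s * Uᵀ := by
    refine ⟨hH.eigenvectorUnitary, hH.eigenvalues, ?_, ?_⟩
    · have := Unitary.mul_star_self_of_mem hH.eigenvectorUnitary.2
      simpa [star_eq_conjTranspose] using this
    · have := hH.spectral_theorem
      rw [Unitary.conjStarAlgAut_apply] at this
      simpa [star_eq_conjTranspose, Function.comp_def] using this
  have hU' : Uᵀ * U = 1 := mul_eq_one_comm.mp hU
  let F : (Fin n → ℝ) → Matrix (Fin n) (Fin n) ℝ := fun a => U * diagonal a * Uᵀ
  have Fmul : ∀ a b, F a * F b = F (fun i => a i * b i) := by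
    intro a b
    calc U * diagonal a * Uᵀ * (U * diagonal b * Uᵀ)
        = U * diagonal a * (Uᵀ * U) * diagonal b * Uᵀ := by simp only [Matrix.mul_assoc]
      _ = _ := by
        rw [hU', Matrix.mul_one, Matrix.mul_assoc U, diagonal_mul_diagonal]
  have Ft : ∀ a, (F a)ᵀ = F a := by
    intro a; simp [F, transpose_mul, Matrix.mul_assoc]
  have F1 : F (fun _ => 1) = 1 := by simp [F, hU]
  have Fsub : ∀ a b, F a - F b = F (fun i => a i - b i) := by
    intro a b
    simp only [F, ← Matrix.sub_mul, ← Matrix.mul_sub, diagonal_sub]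
  have Ffs : ∀ a, fs (F a) = ∑ i, a i ^ 2 := by
    intro a
    rw [show F a = U * diagonal a * Uᵀ from rfl, fs_mul_right _ _ (by simpa using hU'),
      fs_mul_left _ _ hU']
    unfold fs
    refine Finset.sum_congr rfl fun i _ => ?_
    rw [Finset.sum_eq_single i] <;> simp +contextual [eq_comm]
  have hSF : S = F s := hUS
  have hfs : fs (S - 1) = ∑ i, (s i - 1) ^ 2 := by
    rw [hSF, ← F1, Fsub, Ffs]
  have hs : ∀ i, 0 < s i := by
    intro i
    have : (s i - 1) ^ 2 ≤ ∑ i, (s i - 1) ^ 2 :=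
      Finset.single_le_sum (f := fun i => (s i - 1) ^ 2) (fun _ _ => sq_nonneg _) (Finset.mem_univ i)
    rw [hfs] at hS
    nlinarith
  have hFcomm : ∀ f : ℝ → ℝ, F (fun i => f (s i)) * Λ = Λ * F (fun i => f (s i)) := by
    intro f
    set L := Uᵀ * Λ * U with hL
    have h1 : diagonal s * L = L * diagonal s := by
      have : Uᵀ * (S * Λ) * U = Uᵀ * (Λ * S) * U := by rw [hSΛ]
      rw [hUS] at this
      calc diagonal s * L = (Uᵀ * U) * diagonal s * L := by rw [hU', Matrix.one_mul]
        _ = Uᵀ * (U * diagonal s * Uᵀ * Λ) * U := by simp only [hL, Matrix.mul_assoc]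
        _ = Uᵀ * (Λ * (U * diagonal s * Uᵀ)) * U := this
        _ = L * diagonal s * (Uᵀ * U) := by simp only [hL, Matrix.mul_assoc]
        _ = _ := by rw [hU', Matrix.mul_one]
    have h2 : diagonal (fun i => f (s i)) * L = L * diagonal (fun i => f (s i)) := by
      ext i j
      have := congrFun (congrFun h1 i) j
      rw [diagonal_mul, mul_diagonal] at this ⊢
      by_cases h : s i = s j
      · rw [h]; ring
      · have h0 : L i j = 0 := by
          have : (s i - s j) * L i j = 0 := by linarith
          exact (mul_eq_zero.mp this).resolve_left (sub_ne_zero.mpr h)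
        rw [h0]; ring
    have hΛL : Λ = U * L * Uᵀ := by
      calc Λ = (U * Uᵀ) * Λ * (U * Uᵀ) := by rw [hU]; simp
        _ = _ := by simp only [hL, Matrix.mul_assoc]
    calc F (fun i => f (s i)) * Λ
        = U * diagonal (fun i => f (s i)) * (Uᵀ * U) * L * Uᵀ := by
          rw [hΛL]; simp only [F, Matrix.mul_assoc]
      _ = U * (diagonal (fun i => f (s i)) * L) * Uᵀ := by
          rw [hU']; simp only [Matrix.mul_assoc, Matrix.one_mul]
      _ = U * L * (Uᵀ * U) * diagonal (fun i => f (s i)) * Uᵀ := by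
          rw [h2, hU']; simp only [Matrix.mul_assoc, Matrix.one_mul]
      _ = _ := by rw [hΛL]; simp only [F, Matrix.mul_assoc]
  let R := F (fun i => (Real.sqrt (s i))⁻¹)
  let P := F (fun i => Real.sqrt (s i))
  have hRR : R * S * R = 1 := by
    rw [hSF, Fmul, Fmul, ← F1]
    congr 1; funext i
    have h1 := Real.sqrt_pos.mpr (hs i)
    have h2 := Real.mul_self_sqrt (hs i).le
    field_simp
    nlinarith
  have hPR : P * R = 1 := by
    rw [Fmul, ← F1]
    congr 1; funext i
    exact mul_inv_cancel₀ (Real.sqrt_pos.mpr (hs i)).ne'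
  have hQ : (R * D) * (R * D)ᵀ = 1 := by
    rw [transpose_mul, Ft, ← hRR, hSdef]; simp only [R, Matrix.mul_assoc]
  refine ⟨R * D, hQ, ?_, ?_⟩
  · rw [Matrix.mul_assoc, hD, ← Matrix.mul_assoc, hFcomm (fun x => (Real.sqrt x)⁻¹),
      Matrix.mul_assoc]
  · have : R * D - D = (F (fun _ => 1) - P) * (R * D) := by
      rw [F1, Matrix.sub_mul, Matrix.one_mul, ← Matrix.mul_assoc P, hPR, Matrix.one_mul]
    rw [this, fs_mul_right _ _ hQ, Fsub, Ffs, hfs]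
    refine Finset.sum_le_sum fun i _ => ?_
    have h1 := Real.sqrt_nonneg (s i)
    have h2 := Real.sq_sqrt (hs i).le
    have : s i - 1 = (Real.sqrt (s i) - 1) * (Real.sqrt (s i) + 1) := by nlinarith
    rw [this, mul_pow]
    nlinarith [sq_nonneg (Real.sqrt (s i) - 1)]

/-- rotating an orthogonal matrix that is nearly block diagonal. -/
lemma rot {n : ℕ} (c : Matrix (Fin n) (Fin n) ℝ) (h1 : c * cᵀ = 1) (ν : Fin n → ℝ) (e : ℝ)
    (he : e ≤ 1 / 4)
    (hoff : ∑ k, ∑ l, (if ν k = ν l then 0 else c k l ^ 2) ≤ e) :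
    ∃ Q : Matrix (Fin n) (Fin n) ℝ, Q * Qᵀ = 1 ∧ Q * diagonal ν = diagonal ν * Q ∧
      fs (Q - c) ≤ 4 * e := by
  let D : Matrix (Fin n) (Fin n) ℝ := Matrix.of fun k l => if ν k = ν l then c k l else 0
  let E : Matrix (Fin n) (Fin n) ℝ := Matrix.of fun k l => if ν k = ν l then 0 else c k l
  have hE : fs E ≤ e := by
    refine le_trans (le_of_eq ?_) hoff
    unfold fs
    refine Finset.sum_congr rfl fun k _ => Finset.sum_congr rfl fun l _ => ?_
    simp only [E, Matrix.of_apply]; split_ifs <;> simp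
  have hE0 := fs_nonneg E
  have hDE : D - c = -E := by
    ext k l; simp only [D, E, Matrix.of_apply, Matrix.sub_apply, Matrix.neg_apply]
    split_ifs <;> simp
  have hDS : fs (D * Dᵀ - 1) ≤ fs E * fs E := by
    have : fs (E * Eᵀ) ≤ fs E * fs E := by
      have := fs_mul_le E Eᵀ
      rwa [fs_transpose] at this
    refine le_trans ?_ this
    unfold fs
    refine Finset.sum_le_sum fun k _ => Finset.sum_le_sum fun k' _ => ?_
    by_cases h : ν k = ν k'
    · have hh : (D * Dᵀ - 1) k k' = - (E * Eᵀ) k k' := by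
        rw [← h1]
        simp only [Matrix.sub_apply, Matrix.mul_apply, transpose_apply, ← Finset.sum_sub_distrib,
          ← Finset.sum_neg_distrib]
        refine Finset.sum_congr rfl fun l _ => ?_
        simp only [D, E, Matrix.of_apply, ← h]
        split_ifs <;> ring
      rw [hh, neg_sq]
    · have hh : (D * Dᵀ - 1) k k' = 0 := by
        have hk : k ≠ k' := fun hk => h (by rw [hk])
        rw [Matrix.sub_apply, one_apply_ne hk, sub_zero, Matrix.mul_apply]
        refine Finset.sum_eq_zero fun l _ => ?_
        simp only [D, Matrix.of_apply, transpose_apply]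
        split_ifs with h2 h3
        · exact absurd (h2.trans h3.symm) h
        all_goals simp
      rw [hh]; simpa using sq_nonneg _
  obtain ⟨Q, hQ1, hQ2, hQ3⟩ := polar D (diagonal ν) (by
    ext k l
    rw [mul_diagonal, diagonal_mul]
    simp only [D, Matrix.of_apply]
    split_ifs with h
    · rw [h]; ring
    · simp) (by simp) (by nlinarith)
  refine ⟨Q, hQ1, hQ2, ?_⟩
  have h5 : Q - c = (Q - D) + (-E) := by rw [← hDE]; abel
  have h6 : fs (-E) = fs E := by simp [fs]
  rw [h5]
  refine (fs_add_le _ _).trans ?_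
  rw [h6]
  nlinarith

lemma close {n : ℕ} (B Bh U V : Matrix (Fin n) (Fin n) ℝ) (ν νh : Fin n → ℝ)
    (hU : U * Uᵀ = 1) (hV : V * Vᵀ = 1)
    (hB : B * Uᵀ = Uᵀ * diagonal ν) (hBh : Bh * Vᵀ = Vᵀ * diagonal νh)
    (hν : Antitone ν) (hνh : Antitone νh) :
    ∑ k, (ν k - νh k) ^ 2 ≤ fs (B - Bh) ∧
    ∀ g > 0, (∀ k l, ν k ≠ ν l → g ≤ |ν k - ν l|) → fs (B - Bh) ≤ g ^ 2 / 16 →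
      ∃ W : Matrix (Fin n) (Fin n) ℝ, W * Wᵀ = 1 ∧ B * Wᵀ = Wᵀ * diagonal ν ∧
        fs (W - V) ≤ 16 * fs (B - Bh) / g ^ 2 := by
  have hU' : Uᵀ * U = 1 := mul_eq_one_comm.mp hU
  have hV' : Vᵀ * V = 1 := mul_eq_one_comm.mp hV
  have hVB : V * Bh = diagonal νh * V := by
    have h1 : Bh = Vᵀ * diagonal νh * V := by
      rw [← hBh, Matrix.mul_assoc, hV', Matrix.mul_one]
    rw [h1, ← Matrix.mul_assoc, ← Matrix.mul_assoc, hV, Matrix.one_mul]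
  set c := V * Uᵀ with hc
  have hc1 : c * cᵀ = 1 := by
    rw [hc, transpose_mul, transpose_transpose]
    calc V * Uᵀ * (U * Vᵀ) = V * (Uᵀ * U) * Vᵀ := by simp only [Matrix.mul_assoc]
      _ = 1 := by rw [hU', Matrix.mul_one, hV]
  have hcm : V * (B - Bh) * Uᵀ = c * diagonal ν - diagonal νh * c := by
    rw [Matrix.mul_sub, Matrix.sub_mul, hVB, Matrix.mul_assoc V B, hB, hc]
    simp only [Matrix.mul_assoc]
  have hid : fs (B - Bh) = ∑ k, ∑ l, c k l ^ 2 * (ν l - νh k) ^ 2 := by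
    have : fs (V * (B - Bh) * Uᵀ) = fs (B - Bh) := by
      rw [fs_mul_right _ _ (by simpa using hU'), fs_mul_left _ _ hV']
    rw [← this, hcm]
    unfold fs
    refine Finset.sum_congr rfl fun k _ => Finset.sum_congr rfl fun l _ => ?_
    rw [Matrix.sub_apply, mul_diagonal, diagonal_mul]; ring
  have hHW : ∑ k, (ν k - νh k) ^ 2 ≤ fs (B - Bh) := by
    rw [hid]; exact hw c hc1 ν νh hν hνh
  refine ⟨hHW, ?_⟩
  intro g hg hgap hsmall
  have hk : ∀ k, |ν k - νh k| ≤ g / 4 := by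
    intro k
    have h1 : (ν k - νh k) ^ 2 ≤ ∑ k, (ν k - νh k) ^ 2 :=
      Finset.single_le_sum (f := fun k => (ν k - νh k) ^ 2) (fun _ _ => sq_nonneg _)
        (Finset.mem_univ k)
    have h2 : (ν k - νh k) ^ 2 ≤ (g / 4) ^ 2 := by nlinarith
    exact abs_le_of_sq_le_sq h2 (by positivity)
  obtain ⟨Q, hQ1, hQ2, hQ3⟩ := rot c hc1 ν (4 * fs (B - Bh) / g ^ 2) (by
      rw [div_le_iff₀ (by positivity)]; linarith) (by
    rw [le_div_iff₀ (by positivity), hid, Finset.sum_mul, Finset.mul_sum]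
    refine Finset.sum_le_sum fun k _ => ?_
    rw [Finset.sum_mul, Finset.mul_sum]
    refine Finset.sum_le_sum fun l _ => ?_
    split_ifs with h
    · rw [zero_mul]; positivity
    · have h1 := hgap k l h
      have h2 := hk k
      have h3 : |ν k - ν l| ≤ |ν k - νh k| + |ν l - νh k| := by
        rw [abs_sub_comm (ν l)]; exact abs_sub_le _ _ _
      have h4 : g / 2 ≤ |ν l - νh k| := by linarith
      have h5 : (g / 2) ^ 2 ≤ (ν l - νh k) ^ 2 := by
        rw [← sq_abs (ν l - νh k)]
        exact pow_le_pow_left₀ (by positivity) h4 2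
      nlinarith [mul_le_mul_of_nonneg_left h5 (sq_nonneg (c k l))])
  have hQt : diagonal ν * Qᵀ = Qᵀ * diagonal ν := by
    have := congrArg transpose hQ2
    simpa [transpose_mul] using this
  refine ⟨Q * U, ?_, ?_, ?_⟩
  · rw [transpose_mul]
    calc Q * U * (Uᵀ * Qᵀ) = Q * (U * Uᵀ) * Qᵀ := by simp only [Matrix.mul_assoc]
      _ = 1 := by rw [hU, Matrix.mul_one, hQ1]
  · rw [transpose_mul, ← Matrix.mul_assoc, hB, Matrix.mul_assoc, hQt, ← Matrix.mul_assoc]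
  · have : Q * U - V = (Q - c) * U := by
      rw [Matrix.sub_mul, hc, Matrix.mul_assoc V, hU', Matrix.mul_one]
    rw [this, fs_mul_right _ _ hU]
    refine hQ3.trans (le_of_eq ?_)
    ring

lemma decomp_iff {n : ℕ} (δ : Matrix (Fin n) (Fin n) ℝ) (ν : Fin n → ℝ)
    (U : Matrix (Fin n) (Fin n) ℝ) :
    IsEigenDecomp δ ν U ↔
      Antitone ν ∧ U * Uᵀ = 1 ∧ Bmat δ * Uᵀ = Uᵀ * diagonal ν := by
  unfold IsEigenDecomp
  refine and_congr Iff.rfl (and_congr ?_ ?_)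
  · rw [← Matrix.ext_iff]
    simp only [Matrix.mul_apply, transpose_apply, Matrix.one_apply]
  · rw [← Matrix.ext_iff]
    constructor
    · intro h i k
      have := congrFun (h k) i
      rw [mul_diagonal, Matrix.mul_apply]
      simp only [mulVec, dotProduct, Pi.smul_apply, smul_eq_mul] at this
      simp only [transpose_apply]
      rw [this]; ring
    · intro h k
      funext i
      have := h i k
      rw [mul_diagonal, Matrix.mul_apply] at this
      simp only [transpose_apply] at this
      simp only [mulVec, dotProduct, Pi.smul_apply, smul_eq_mul]
      rw [this]; ring

lemma gap_exists {n : ℕ} (ν : Fin n → ℝ) :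
    ∃ g > 0, ∀ k l, ν k ≠ ν l → g ≤ |ν k - ν l| := by
  have h : ∀ s : Finset (Fin n × Fin n),
      ∃ g > 0, ∀ q ∈ s, ν q.1 ≠ ν q.2 → g ≤ |ν q.1 - ν q.2| := by
    intro s
    induction s using Finset.induction_on with
    | empty => exact ⟨1, one_pos, by simp⟩
    | insert a s _ ih =>
      obtain ⟨g, hg, h⟩ := ih
      by_cases ha : ν a.1 = ν a.2
      · refine ⟨g, hg, fun q hq hne => ?_⟩
        rcases Finset.mem_insert.mp hq with rfl | hq
        · exact absurd ha hne
        · exact h q hq hne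
      · refine ⟨min g |ν a.1 - ν a.2|, lt_min hg (abs_pos.mpr (sub_ne_zero.mpr ha)),
          fun q hq hne => ?_⟩
        rcases Finset.mem_insert.mp hq with rfl | hq
        · exact min_le_right _ _
        · exact (min_le_left _ _).trans (h q hq hne)
  obtain ⟨g, hg, h⟩ := h Finset.univ
  exact ⟨g, hg, fun k l => h (k, l) (Finset.mem_univ _)⟩

lemma sqrt_diff_abs (x y : ℝ) :
    (Real.sqrt (max x 0) - Real.sqrt (max y 0)) ^ 2 ≤ |x - y| := by
  have h1 := Real.sqrt_nonneg (max x 0)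
  have h2 := Real.sqrt_nonneg (max y 0)
  have h3 := Real.sq_sqrt (le_max_right x 0)
  have h4 := Real.sq_sqrt (le_max_right y 0)
  have h5 : |max x 0 - max y 0| ≤ |x - y| := by
    simpa using abs_max_sub_max_le_max x 0 y 0
  refine le_trans ?_ h5
  generalize Real.sqrt (max x 0) = a at *
  generalize Real.sqrt (max y 0) = b at *
  rw [← h3, ← h4]
  rw [show a ^ 2 - b ^ 2 = (a - b) * (a + b) by ring, abs_mul, abs_of_nonneg (add_nonneg h1 h2),
    ← sq_abs, pow_two]
  refine mul_le_mul_of_nonneg_left ?_ (abs_nonneg _)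
  rw [abs_le]; constructor <;> linarith

lemma sqrt_diff_sq (m x y : ℝ) (hm : 0 < m) (hx : m ≤ x) :
    (Real.sqrt (max x 0) - Real.sqrt (max y 0)) ^ 2 ≤ (x - y) ^ 2 / m := by
  have h1 := Real.sqrt_nonneg (max x 0)
  have h2 := Real.sqrt_nonneg (max y 0)
  have h3 := Real.sq_sqrt (le_max_right x 0)
  have h4 := Real.sq_sqrt (le_max_right y 0)
  have h5 : |max x 0 - max y 0| ≤ |x - y| := by
    simpa using abs_max_sub_max_le_max x 0 y 0
  have h6 : (max x 0 - max y 0) ^ 2 ≤ (x - y) ^ 2 := sq_le_sq.mpr h5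
  have h7 : m ≤ max x 0 := hx.trans (le_max_left _ _)
  rw [le_div_iff₀ hm]
  refine le_trans ?_ h6
  generalize Real.sqrt (max x 0) = a at *
  generalize Real.sqrt (max y 0) = b at *
  rw [← h3, ← h4]
  rw [← h3] at h7
  rw [show (a ^ 2 - b ^ 2) ^ 2 = (a - b) ^ 2 * (a + b) ^ 2 by ring]
  refine mul_le_mul_of_nonneg_left ?_ (sq_nonneg _)
  nlinarith

lemma row_one {n : ℕ} {U : Matrix (Fin n) (Fin n) ℝ} (hU : U * Uᵀ = 1) (k : Fin n) :
    ∑ i, U k i ^ 2 = 1 := by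
  have := congrFun (congrFun hU k) k
  simpa [Matrix.mul_apply, pow_two] using this

/-- bound of one column of the embedding, large perturbation. -/
lemma row_large {n : ℕ} {U V : Matrix (Fin n) (Fin n) ℝ} (hU : U * Uᵀ = 1) (hV : V * Vᵀ = 1)
    (k : Fin n) (a b : ℝ) :
    ∑ i, (a * U k i - b * V k i) ^ 2 ≤ 2 * a ^ 2 + 2 * b ^ 2 := by
  calc ∑ i, (a * U k i - b * V k i) ^ 2
      ≤ ∑ i, (2 * a ^ 2 * U k i ^ 2 + 2 * b ^ 2 * V k i ^ 2) :=
        Finset.sum_le_sum fun i _ => by nlinarith [sq_nonneg (a * U k i + b * V k i)]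
    _ = _ := by
        rw [Finset.sum_add_distrib, ← Finset.mul_sum, ← Finset.mul_sum, row_one hU, row_one hV]
        ring

lemma row_small {n : ℕ} {U V : Matrix (Fin n) (Fin n) ℝ} (hV : V * Vᵀ = 1)
    (k : Fin n) (a b : ℝ) :
    ∑ i, (a * U k i - b * V k i) ^ 2 ≤ 2 * a ^ 2 * fs (U - V) + 2 * (a - b) ^ 2 := by
  have h1 : ∑ i, (U k i - V k i) ^ 2 ≤ fs (U - V) := by
    unfold fs
    exact Finset.single_le_sum (f := fun k => ∑ i, (U - V) k i ^ 2)
      (fun _ _ => Finset.sum_nonneg fun _ _ => sq_nonneg _) (Finset.mem_univ k)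
  calc ∑ i, (a * U k i - b * V k i) ^ 2
      ≤ ∑ i, (2 * a ^ 2 * (U k i - V k i) ^ 2 + 2 * (a - b) ^ 2 * V k i ^ 2) :=
        Finset.sum_le_sum fun i _ => by
          nlinarith [sq_nonneg (a * (U k i - V k i) - (a - b) * V k i)]
    _ = 2 * a ^ 2 * ∑ i, (U k i - V k i) ^ 2 + 2 * (a - b) ^ 2 := by
        rw [Finset.sum_add_distrib, ← Finset.mul_sum, ← Finset.mul_sum, row_one hV]
        ring
    _ ≤ _ := by
        have := mul_le_mul_of_nonneg_left h1 (by positivity : 0 ≤ 2 * a ^ 2)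
        linarith

/-- the main perturbation bound, one embedding coordinate at a time. -/
lemma main_bound {n : ℕ} (B U : Matrix (Fin n) (Fin n) ℝ) (ν : Fin n → ℝ)
    (hU : U * Uᵀ = 1) (hB : B * Uᵀ = Uᵀ * diagonal ν) (hν : Antitone ν) (m : ℝ) :
    ∃ C1 C2 : ℝ, 0 ≤ C1 ∧ 0 ≤ C2 ∧ ∀ (Bh V : Matrix (Fin n) (Fin n) ℝ) (νh : Fin n → ℝ),
      V * Vᵀ = 1 → Bh * Vᵀ = Vᵀ * diagonal νh → Antitone νh →
      ∃ W : Matrix (Fin n) (Fin n) ℝ, W * Wᵀ = 1 ∧ B * Wᵀ = Wᵀ * diagonal ν ∧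
        ∀ k, (0 < m → m ≤ ν k →
            ∑ i, (Real.sqrt (max (ν k) 0) * W k i - Real.sqrt (max (νh k) 0) * V k i) ^ 2
              ≤ C1 * fs (B - Bh)) ∧
            ∑ i, (Real.sqrt (max (ν k) 0) * W k i - Real.sqrt (max (νh k) 0) * V k i) ^ 2
              ≤ C2 * Real.sqrt (fs (B - Bh)) := by
  obtain ⟨g, hg, hgap⟩ := gap_exists ν
  set N := ∑ k, |ν k| with hN
  have hN0 : 0 ≤ N := Finset.sum_nonneg fun _ _ => abs_nonneg _
  have hNk : ∀ k, |ν k| ≤ N := fun k =>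
    Finset.single_le_sum (f := fun k => |ν k|) (fun _ _ => abs_nonneg _) (Finset.mem_univ k)
  refine ⟨(32 * N / g ^ 2 + 2 / |m|) + (16 * N / g + 2) * (4 / g), (8 * N / g + 2) + (16 * N / g + 2),
    by positivity, by positivity, ?_⟩
  intro Bh V νh hV hBh hνh
  obtain ⟨hHW, hcl⟩ := close B Bh U V ν νh hU hV hB hBh hν hνh
  set η := Real.sqrt (fs (B - Bh)) with hη
  have hη0 : 0 ≤ η := Real.sqrt_nonneg _
  have hη2 : fs (B - Bh) = η ^ 2 := (Real.sq_sqrt (fs_nonneg _)).symm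
  rw [hη2] at hHW hcl ⊢
  have hk2 : ∀ k, (ν k - νh k) ^ 2 ≤ η ^ 2 := fun k =>
    (Finset.single_le_sum (f := fun k => (ν k - νh k) ^ 2) (fun _ _ => sq_nonneg _)
        (Finset.mem_univ k)).trans hHW
  have hk1 : ∀ k, |ν k - νh k| ≤ η := fun k => abs_le_of_sq_le_sq (hk2 k) hη0
  have ha : ∀ k, Real.sqrt (max (ν k) 0) ^ 2 ≤ N := fun k => by
    rw [Real.sq_sqrt (le_max_right _ _)]
    exact max_le ((le_abs_self _).trans (hNk k)) hN0
  have hb : ∀ k, Real.sqrt (max (νh k) 0) ^ 2 ≤ N + η := fun k => by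
    rw [Real.sq_sqrt (le_max_right _ _)]
    have h1 := (abs_le.mp (hk1 k)).1
    have h2 := (le_abs_self _).trans (hNk k)
    exact max_le (by linarith) (by linarith)
  by_cases hs : η ≤ g / 4
  · obtain ⟨W, hW1, hW2, hW3⟩ := hcl g hg hgap (by
      have := pow_le_pow_left₀ hη0 hs 2
      linarith [this, show (g / 4) ^ 2 = g ^ 2 / 16 by ring])
    refine ⟨W, hW1, hW2, fun k => ?_⟩
    have hr := row_small (U := W) hV k (Real.sqrt (max (ν k) 0)) (Real.sqrt (max (νh k) 0))
    have h1 : 2 * Real.sqrt (max (ν k) 0) ^ 2 * fs (W - V) ≤ 32 * N / g ^ 2 * η ^ 2 := by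
      calc _ ≤ 2 * N * (16 * η ^ 2 / g ^ 2) :=
            mul_le_mul (by linarith [ha k]) hW3 (fs_nonneg _) (by positivity)
        _ = _ := by ring
    constructor
    · intro hm hmk
      have h2 := sqrt_diff_sq m (ν k) (νh k) hm hmk
      have h3 : (ν k - νh k) ^ 2 / m ≤ η ^ 2 / m := div_le_div_of_nonneg_right (hk2 k) hm.le
      rw [abs_of_pos hm]
      have h4 : 0 ≤ (16 * N / g + 2) * (4 / g) * η ^ 2 := by positivity
      have h5 : (2 / m) * η ^ 2 = 2 * (η ^ 2 / m) := by ring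
      rw [add_mul, add_mul, h5]
      linarith
    · have h2 := (sqrt_diff_abs (ν k) (νh k)).trans (hk1 k)
      have h3 : 32 * N / g ^ 2 * η ^ 2 ≤ 8 * N / g * η := by
        calc 32 * N / g ^ 2 * η ^ 2 = 32 * N / g ^ 2 * η * η := by ring
          _ ≤ 32 * N / g ^ 2 * η * (g / 4) := mul_le_mul_of_nonneg_left hs (by positivity)
          _ = _ := by field_simp; ring
      have h4 : 0 ≤ (16 * N / g + 2) * η := by positivity
      rw [add_mul, add_mul]
      linarith
  · push Not at hs
    refine ⟨U, hU, hB, fun k => ?_⟩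
    have hr := row_large hU hV k (Real.sqrt (max (ν k) 0)) (Real.sqrt (max (νh k) 0))
    have h0 : ∑ i, (Real.sqrt (max (ν k) 0) * U k i - Real.sqrt (max (νh k) 0) * V k i) ^ 2
        ≤ (16 * N / g + 2) * η := by
      have h1 : 4 * N ≤ 16 * N / g * η := by
        calc 4 * N = 16 * N / g * (g / 4) := by field_simp; ring
          _ ≤ _ := mul_le_mul_of_nonneg_left hs.le (by positivity)
      rw [add_mul]
      linarith [ha k, hb k]
    constructor
    · intro hm _
      refine h0.trans ?_
      have h1 : η ≤ 4 / g * η ^ 2 := by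
        calc η = 4 / g * (η * (g / 4)) := by field_simp
          _ ≤ 4 / g * (η * η) := by gcongr
          _ = _ := by ring
      have h2 : 0 ≤ (32 * N / g ^ 2 + 2 / |m|) * η ^ 2 := by positivity
      have h3 := mul_le_mul_of_nonneg_left h1 (by positivity : 0 ≤ 16 * N / g + 2)
      rw [add_mul]
      linarith
    · have h4 : 0 ≤ (8 * N / g + 2) * η := by positivity
      rw [add_mul]
      linarith

theorem stmt3 (n de : ℕ) (hde : 1 ≤ de) (hden : de ≤ n)
    (δ : Matrix (Fin n) (Fin n) ℝ) (hsym : δ.IsSymm) (hdiag : ∀ i, δ i i = 0)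
    (hnn : ∀ i j, 0 ≤ δ i j)
    (ν : Fin n → ℝ) (u : Fin n → Fin n → ℝ) (hdecomp : IsEigenDecomp δ ν u)
    (hν : 0 ≤ ν (Fin.castLE hden ⟨de - 1, by omega⟩)) :
    ∃ C > (0 : ℝ), ∀ δh : Matrix (Fin n) (Fin n) ℝ, δh.IsSymm → (∀ i, δh i i = 0) →
      (∀ i j, 0 ≤ δh i j) →
      ∀ ph : Fin n → EuclideanSpace ℝ (Fin de), IsCSEmbedding de hden δh ph →
      ∃ p : Fin n → EuclideanSpace ℝ (Fin de), IsCSEmbedding de hden δ p ∧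
        ((0 < ν (Fin.castLE hden ⟨de - 1, by omega⟩) →
            ∑ i, ‖p i - ph i‖ ^ 2 ≤ C * n ^ 2 * frob (Amat δ - Amat δh) ^ 2) ∧
         (ν (Fin.castLE hden ⟨de - 1, by omega⟩) = 0 →
            ∑ i, ‖p i - ph i‖ ^ 2 ≤ C * n ^ 2 * frob (Amat δ - Amat δh))) := by
  obtain ⟨hanti, hU, hB⟩ := (decomp_iff δ ν u).mp hdecomp
  set m := ν (Fin.castLE hden ⟨de - 1, by omega⟩) with hm
  obtain ⟨C1, C2, hC1, hC2, hmain⟩ := main_bound (Bmat δ) u ν hU hB hanti m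
  set K := fs (Hmat n) with hK
  have hK0 : 0 ≤ K := fs_nonneg _
  refine ⟨de * (C1 * K ^ 2 + C2 * K) + 1, by positivity, ?_⟩
  intro δh _ _ _ ph hph
  obtain ⟨νh, V, hVd, hpV⟩ := hph
  obtain ⟨hVa, hV, hVB⟩ := (decomp_iff δh νh V).mp hVd
  obtain ⟨W, hW, hWB, hbd⟩ := hmain (Bmat δh) V νh hV hVB hVa
  refine ⟨fun i => WithLp.toLp 2 fun k =>
    Real.sqrt (max (ν (Fin.castLE hden k)) 0) * W (Fin.castLE hden k) i,
    ⟨ν, W, (decomp_iff δ ν W).mpr ⟨hanti, hW, hWB⟩, fun i k => rfl⟩, ?_⟩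
  have hn : (1 : ℝ) ≤ (n : ℝ) ^ 2 := by
    have : (1 : ℝ) ≤ n := by exact_mod_cast hde.trans hden
    nlinarith
  set F := frob (Amat δ - Amat δh) with hF
  have hF0 : 0 ≤ F := Real.sqrt_nonneg _
  have hF2 : fs (Amat δ - Amat δh) = F ^ 2 := (Real.sq_sqrt (fs_nonneg _)).symm
  have hBA : fs (Bmat δ - Bmat δh) ≤ (K * F) ^ 2 := by
    have : Bmat δ - Bmat δh = Hmat n * (Amat δ - Amat δh) * Hmat n := by
      simp only [Bmat, Matrix.mul_sub, Matrix.sub_mul]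
    rw [this]
    refine (fs_mul_le _ _).trans ?_
    have h1 := mul_le_mul_of_nonneg_right (fs_mul_le (Hmat n) (Amat δ - Amat δh)) hK0
    rw [hF2] at h1
    refine h1.trans (le_of_eq ?_)
    ring
  have hBA' : Real.sqrt (fs (Bmat δ - Bmat δh)) ≤ K * F :=
    Real.sqrt_le_iff.mpr ⟨by positivity, hBA⟩
  have hsum : ∀ T : ℝ, (∀ k : Fin de, ∑ i, (Real.sqrt (max (ν (Fin.castLE hden k)) 0)
        * W (Fin.castLE hden k) i - Real.sqrt (max (νh (Fin.castLE hden k)) 0)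
        * V (Fin.castLE hden k) i) ^ 2 ≤ T) →
      ∑ i, ‖(WithLp.toLp 2 fun k =>
        Real.sqrt (max (ν (Fin.castLE hden k)) 0) * W (Fin.castLE hden k) i :
          EuclideanSpace ℝ (Fin de)) - ph i‖ ^ 2 ≤ de * T := by
    intro T hT
    simp only [EuclideanSpace.norm_sq_eq, Real.norm_eq_abs, sq_abs, PiLp.sub_apply, hpV]
    rw [Finset.sum_comm]
    refine (Finset.sum_le_sum fun k _ => hT k).trans (le_of_eq ?_)
    simp
  have hmk : ∀ k : Fin de, m ≤ ν (Fin.castLE hden k) := fun k => by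
    apply hanti
    rw [Fin.le_def]
    have := k.2
    simp only [Fin.val_castLE]
    omega
  constructor
  · intro hpos
    refine (hsum _ fun k => ((hbd _).1 hpos (hmk k)).trans
      (mul_le_mul_of_nonneg_left hBA hC1)).trans ?_
    have h1 : (de : ℝ) * (C1 * (K * F) ^ 2)
        ≤ (de * (C1 * K ^ 2 + C2 * K) + 1) * F ^ 2 := by
      have : 0 ≤ (de * (C2 * K) + 1) * F ^ 2 := by positivity
      nlinarith
    refine h1.trans ?_
    have h2 : 0 ≤ (de * (C1 * K ^ 2 + C2 * K) + 1) * F ^ 2 := by positivity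
    nlinarith [mul_le_mul_of_nonneg_left hn h2]
  · intro _
    refine (hsum _ fun k => (hbd _).2.trans (mul_le_mul_of_nonneg_left hBA' hC2)).trans ?_
    have h1 : (de : ℝ) * (C2 * (K * F))
        ≤ (de * (C1 * K ^ 2 + C2 * K) + 1) * F := by
      have : 0 ≤ (de * (C1 * K ^ 2) + 1) * F := by positivity
      nlinarith
    refine h1.trans ?_
    have h2 : 0 ≤ (de * (C1 * K ^ 2 + C2 * K) + 1) * F := by positivity
    nlinarith [mul_le_mul_of_nonneg_left hn h2]

end Stmt3
end
end

section
/- Let (X, δ) be a proper metric space (every closed ball is compact). Suppose the intrinsic metric δ_L induced by δ satisfies δ_L(q,q') = δ(q,q')·(1 + ω(q,q')) for all q,q' ∈ X, where ω : X×X → ℝ is continuous and ω(q,q) = 0 for all q. Fix p, p' ∈ X with δ_L(p,p') < ∞. For each n, let S_n ⊂ X be a finite set containing p and p', put ε_n = sup_{q ∈ X} min_{s ∈ S_n} δ(q,s), and let r_n > 0. Let d_n(p,p') be the shortest-path distance between p and p' in the graph with vertex set S_n, an edge between s, s' whenever δ(s,s') ≤ r_n, with edge weight δ(s,s') (with d_n(p,p')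 = ∞ if p, p' are not connected). If ε_n → 0, r_n → 0, and ε_n / r_n → 0, then d_n(p,p') → δ_L(p,p') as n → ∞. -/
open Filter Set
open scoped ENNReal BigOperators Topology

noncomputable section

namespace Stmt4

variable {X : Type*} [MetricSpace X]

/-- The length of a path `γ : [0,1] → X`: the supremum over partitions
`0 = t₀ < t₁ < ⋯ < t_k = 1` of the sum of distances between consecutive images. -/
def pathLength (γ : ℝ → X) : ℝ≥0∞ :=
  ⨆ (k : ℕ) (t : Fin (k + 1) → ℝ)
    (_ : StrictMono t ∧ t 0 = 0 ∧ t (Fin.last k) = 1),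
    ∑ i : Fin k, edist (γ (t i.castSucc)) (γ (t i.succ))

/-- The intrinsic (inner) metric induced by the metric of `X`: the infimum of lengths of
continuous paths connecting the two points (`∞` if there is no rectifiable path). -/
def intrinsicDist (a b : X) : ℝ≥0∞ :=
  ⨅ (γ : ℝ → X) (_ : ContinuousOn γ (Icc 0 1) ∧ γ 0 = a ∧ γ 1 = b), pathLength γ

/-- The mesh `ε = sup_q min_{s ∈ S} δ(q, s)` of a finite set `S` in `X`. -/
def mesh (S : Finset X) : ℝ≥0∞ :=
  ⨆ q : X, ⨅ s ∈ S, edist q s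

/-- The shortest-path distance between `a` and `b` in the graph with vertex set `S`,
an edge between `s, s'` whenever `δ(s,s') ≤ r`, and edge weights `δ(s,s')`
(`∞` if `a` and `b` are not connected). -/
def graphDist (S : Finset X) (r : ℝ) (a b : X) : ℝ≥0∞ :=
  ⨅ (m : ℕ) (f : Fin (m + 1) → X)
    (_ : (∀ i, f i ∈ S) ∧ f 0 = a ∧ f (Fin.last m) = b ∧
      ∀ i : Fin m, dist (f i.castSucc) (f i.succ) ≤ r),
    ∑ i : Fin m, edist (f i.castSucc) (f i.succ)

lemma strict_refine (γ : ℝ → X) (u : ℕ → ℝ) (hu : Monotone u) (n : ℕ) :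
    ∃ (k : ℕ) (t : Fin (k + 1) → ℝ), StrictMono t ∧ t 0 = u 0 ∧ t (Fin.last k) = u n ∧
      ∑ i ∈ Finset.range n, edist (γ (u (i + 1))) (γ (u i)) =
        ∑ i : Fin k, edist (γ (t i.castSucc)) (γ (t i.succ)) := by
  induction n with
  | zero =>
    refine ⟨0, fun _ => u 0, ?_, rfl, rfl, by simp⟩
    intro a b hab
    exact absurd (Fin.lt_def.1 hab) (by omega)
  | succ n ih =>
    obtain ⟨k, t, ht, h0, hl, hs⟩ := ih
    rcases (hu (Nat.le_succ n)).eq_or_lt with h | h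
    · refine ⟨k, t, ht, h0, hl.trans h, ?_⟩
      rw [Finset.sum_range_succ, hs, ← Nat.succ_eq_add_one, ← h]
      simp
    · refine ⟨k + 1, Fin.snoc (α := fun _ => ℝ) t (u (n + 1)), ?_, ?_, ?_, ?_⟩
      · rw [Fin.strictMono_iff_lt_succ]
        intro i
        refine Fin.lastCases ?_ (fun j => ?_) i
        · rw [Fin.succ_last, Fin.snoc_last, Fin.snoc_castSucc, hl]
          exact h
        · rw [Fin.snoc_castSucc, Fin.succ_castSucc, Fin.snoc_castSucc]
          exact ht j.castSucc_lt_succ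
      · rw [← Fin.castSucc_zero, Fin.snoc_castSucc, h0]
      · rw [Fin.snoc_last]
      · rw [Finset.sum_range_succ, hs, Fin.sum_univ_castSucc]
        congr 1
        · refine Finset.sum_congr rfl fun j _ => ?_
          rw [Fin.snoc_castSucc, Fin.succ_castSucc, Fin.snoc_castSucc]
        · rw [Fin.succ_last, Fin.snoc_last, Fin.snoc_castSucc, hl, edist_comm]

lemma pathLength_eq (γ : ℝ → X) : pathLength γ = eVariationOn γ (Icc 0 1) := by
  apply le_antisymm
  · refine iSup_le fun k => iSup_le fun t => iSup_le fun ⟨ht, h0, h1⟩ => ?_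
    let u : ℕ → ℝ := fun i => t (Fin.ofNat (k + 1) (min i k))
    have hu : Monotone u := by
      intro a b hab
      apply ht.monotone
      rw [Fin.le_def]
      simp only [Fin.ofNat]
      rw [Nat.mod_eq_of_lt (by omega), Nat.mod_eq_of_lt (by omega)]
      omega
    have us : ∀ i, u i ∈ Icc (0 : ℝ) 1 := fun i =>
      ⟨h0 ▸ ht.monotone (Fin.zero_le _), h1 ▸ ht.monotone (Fin.le_last _)⟩
    refine le_trans (le_of_eq ?_) (eVariationOn.sum_le (f := γ) (n := k) hu us)
    rw [Finset.sum_range]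
    refine Finset.sum_congr rfl fun i _ => ?_
    have e1 : u (i + 1) = t i.succ := by
      simp only [u]; congr 1; ext; simp only [Fin.ofNat, Fin.val_succ]
      rw [Nat.mod_eq_of_lt (by omega)]; omega
    have e2 : u i = t i.castSucc := by
      simp only [u]; congr 1; ext; simp only [Fin.ofNat, Fin.val_castSucc]
      rw [Nat.mod_eq_of_lt (by omega)]; omega
    rw [e1, e2, edist_comm]
  · refine iSup_le fun ⟨n, u, hu, us⟩ => ?_
    let v : ℕ → ℝ := fun i => if i = 0 then 0 else if i ≤ n + 1 then u (i - 1) else 1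
    have hv : Monotone v := by
      refine monotone_nat_of_le_succ fun i => ?_
      simp only [v]
      split_ifs <;> first | (exfalso; omega) | exact (us _).1 | exact (us _).2 | exact hu (by omega) | norm_num
    obtain ⟨k, t, ht, h0, h1, hs⟩ := strict_refine γ v hv (n + 2)
    have : ∑ i ∈ Finset.range n, edist (γ (u (i + 1))) (γ (u i)) ≤
        ∑ i ∈ Finset.range (n + 2), edist (γ (v (i + 1))) (γ (v i)) := by
      rw [Finset.sum_range_succ, Finset.sum_range_succ']
      refine le_trans ?_ (le_self_add.trans le_self_add)
      refine le_of_eq (Finset.sum_congr rfl fun i hi => ?_)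
      have := Finset.mem_range.1 hi
      have e1 : v (i + 1 + 1) = u (i + 1) := by
        simp only [v]; rw [if_neg (by omega), if_pos (by omega)]; congr 1
      have e2 : v (i + 1) = u i := by
        simp only [v]; rw [if_neg (by omega), if_pos (by omega)]; congr 1
      rw [e1, e2]
    refine this.trans ?_
    rw [hs]
    refine le_iSup_of_le k (le_iSup_of_le t (le_iSup_of_le ⟨ht, ?_, ?_⟩ le_rfl))
    · rw [h0]; simp [v]
    · rw [h1]; simp [v]

lemma eVar_split (f : ℝ → X) {a b c : ℝ} (hab : a ≤ b) (hbc : b ≤ c) :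
    eVariationOn f (Icc a b) + eVariationOn f (Icc b c) = eVariationOn f (Icc a c) := by
  simpa using eVariationOn.Icc_add_Icc f (s := univ) hab hbc (mem_univ b)

lemma intrinsic_triangle (a b c : X) :
    intrinsicDist a c ≤ intrinsicDist a b + intrinsicDist b c := by
  refine ENNReal.le_of_forall_pos_le_add ?_ |> fun h => h
  intro ε hε hfin
  have hA : intrinsicDist a b < intrinsicDist a b + (ε / 2 : NNReal) :=
    ENNReal.lt_add_right (ne_top_of_le_ne_top hfin.ne le_self_add)
      (by simpa using hε.ne')
  have hB : intrinsicDist b c < intrinsicDist b c + (ε / 2 : NNReal) :=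
    ENNReal.lt_add_right (ne_top_of_le_ne_top hfin.ne le_add_self)
      (by simpa using hε.ne')
  obtain ⟨γ, hγ⟩ := iInf_lt_iff.1 hA
  obtain ⟨⟨hc, h0, h1⟩, hγ⟩ := iInf_lt_iff.1 hγ
  obtain ⟨σ, hσ⟩ := iInf_lt_iff.1 hB
  obtain ⟨⟨kc, k0, k1⟩, hσ⟩ := iInf_lt_iff.1 hσ
  rw [pathLength_eq] at hγ hσ
  let τ : ℝ → X := fun t => if t ≤ 1 / 2 then γ (2 * t) else σ (2 * t - 1)
  have E1 : EqOn τ (γ ∘ fun t => 2 * t) (Icc 0 (1 / 2)) := by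
    intro t ht
    simp only [τ, Function.comp]
    rw [if_pos ht.2]
  have E2 : EqOn τ (σ ∘ fun t => 2 * t - 1) (Icc (1 / 2) 1) := by
    intro t ht
    simp only [τ, Function.comp]
    split_ifs with h
    · have : t = 1 / 2 := le_antisymm h ht.1
      subst this
      norm_num [h1, k0]
    · rfl
  have M1 : MapsTo (fun t : ℝ => 2 * t) (Icc 0 (1 / 2)) (Icc 0 1) := by
    intro t ht; constructor <;> simp only <;> linarith [ht.1, ht.2]
  have M2 : MapsTo (fun t : ℝ => 2 * t - 1) (Icc (1 / 2) 1) (Icc 0 1) := by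
    intro t ht; constructor <;> simp only <;> linarith [ht.1, ht.2]
  have C : ContinuousOn τ (Icc 0 1) := by
    have := ContinuousOn.union_of_isClosed (f := τ) (s := Icc 0 (1 / 2)) (t := Icc (1 / 2) 1)
      ((hc.comp (by fun_prop) M1).congr E1) ((kc.comp (by fun_prop) M2).congr E2)
      isClosed_Icc isClosed_Icc
    rwa [Icc_union_Icc_eq_Icc (by norm_num) (by norm_num)] at this
  have L : pathLength τ ≤ eVariationOn γ (Icc 0 1) + eVariationOn σ (Icc 0 1) := by
    rw [pathLength_eq, ← eVar_split τ (b := 1 / 2) (by norm_num) (by norm_num)]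
    rw [eVariationOn.congr E1, eVariationOn.congr E2]
    refine add_le_add (eVariationOn.comp_le_of_monotoneOn _ _ ?_ M1)
      (eVariationOn.comp_le_of_monotoneOn _ _ ?_ M2)
    · intro x _ y _ h; simp only; linarith
    · intro x _ y _ h; simp only; linarith
  have T0 : τ 0 = a := by simp [τ, h0]
  have T1 : τ 1 = c := by norm_num [τ, k1]
  calc intrinsicDist a c ≤ pathLength τ := iInf_le_of_le τ (iInf_le _ ⟨C, T0, T1⟩)
    _ ≤ _ := L
    _ ≤ (intrinsicDist a b + (ε / 2 : NNReal)) + (intrinsicDist b c + (ε / 2 : NNReal)) :=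
        add_le_add hγ.le hσ.le
    _ = intrinsicDist a b + intrinsicDist b c + ((ε / 2 : NNReal) + (ε / 2 : NNReal)) := by ring
    _ = _ := by rw [← ENNReal.coe_add, add_halves]

lemma intrinsic_sum (h0 : ∀ q : X, intrinsicDist q q = 0) (m : ℕ) (f : Fin (m + 1) → X) :
    intrinsicDist (f 0) (f (Fin.last m)) ≤
      ∑ i : Fin m, intrinsicDist (f i.castSucc) (f i.succ) := by
  induction m with
  | zero => simp [h0]
  | succ m ih =>
    rw [Fin.sum_univ_castSucc]
    refine (intrinsic_triangle _ (f (Fin.last m).castSucc) _).trans ?_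
    refine add_le_add ?_ (by rw [Fin.succ_last])
    exact ih (fun i => f i.castSucc)

lemma graph_single {S : Finset X} {r : ℝ} {a b : X} (ha : a ∈ S) (hb : b ∈ S)
    (h : dist a b ≤ r) : graphDist S r a b ≤ edist a b := by
  refine iInf_le_of_le 1 (iInf_le_of_le ![a, b] (iInf_le_of_le ⟨?_, rfl, rfl, ?_⟩ ?_))
  · intro i; fin_cases i <;> simp [ha, hb]
  · intro i; fin_cases i; simpa using h
  · simp

lemma graph_step {S : Finset X} {r : ℝ} {a b c : X} (ha : a ∈ S)
    (h : dist a b ≤ r) : graphDist S r a c ≤ edist a b + graphDist S r b c := by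
  unfold graphDist
  simp only [ENNReal.add_iInf]
  refine le_iInf fun m => le_iInf fun f => le_iInf fun ⟨hS, h0, hl, hr⟩ => ?_
  refine iInf_le_of_le (m + 1) (iInf_le_of_le (Fin.cons a f : Fin (m + 2) → X)
    (iInf_le_of_le ⟨?_, ?_, ?_, ?_⟩ ?_))
  · intro i
    refine Fin.cases ?_ (fun j => ?_) i
    · simpa using ha
    · simpa using hS j
  · simp
  · rw [← Fin.succ_last, Fin.cons_succ, hl]
  · intro i
    refine Fin.cases ?_ (fun j => ?_) i
    · simpa [h0] using h
    · rw [← Fin.succ_castSucc, Fin.cons_succ, Fin.cons_succ]; exact hr j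
  · rw [Fin.sum_univ_succ]
    refine le_of_eq (congrArg₂ _ ?_ ?_)
    · simp [h0]
    · refine Finset.sum_congr rfl fun j _ => ?_
      rw [← Fin.succ_castSucc, Fin.cons_succ, Fin.cons_succ]

lemma chain {S : Finset X} {r h e : ℝ} (hh : 0 < h) (he : 0 ≤ e) (hr : h + 2 * e ≤ r)
    (hS : ∀ q : X, ∃ s ∈ S, dist q s ≤ e) (γ : ℝ → X) (b : ℝ) (hb : γ b ∈ S) (K : ℕ) :
    ∀ (a : ℝ) (s : X), a ≤ b → ContinuousOn γ (Icc a b) → s ∈ S → dist (γ a) s ≤ e →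
      eVariationOn γ (Icc a b) ≤ K * ENNReal.ofReal h →
      graphDist S r s (γ b) ≤
        eVariationOn γ (Icc a b) + (K + 1) * ENNReal.ofReal (2 * e) := by
  have hsingle : ∀ (a : ℝ) (s : X), a ≤ b → s ∈ S → dist (γ a) s ≤ e → dist (γ a) (γ b) ≤ h →
      graphDist S r s (γ b) ≤ eVariationOn γ (Icc a b) + ENNReal.ofReal (2 * e) := by
    intro a s hab hs hd hle
    have t1 : dist s (γ b) ≤ dist (γ a) s + dist (γ a) (γ b) := dist_triangle_left _ _ _
    refine (graph_single hs hb (by linarith)).trans ?_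
    refine (edist_triangle_left _ _ (γ a)).trans ?_
    rw [add_comm]
    refine add_le_add (eVariationOn.edist_le γ (left_mem_Icc.2 hab) (right_mem_Icc.2 hab)) ?_
    rw [edist_dist]
    exact ENNReal.ofReal_le_ofReal (by linarith)
  induction K with
  | zero =>
    intro a s hab hc hs hd hV
    have h1 := (eVariationOn.edist_le γ (left_mem_Icc.2 hab) (right_mem_Icc.2 hab)).trans hV
    have : dist (γ a) (γ b) = 0 := by simpa using h1
    simpa using hsingle a s hab hs hd (by linarith)
  | succ K ih =>
    intro a s hab hc hs hd hV
    by_cases hle : dist (γ a) (γ b) ≤ h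
    · refine (hsingle a s hab hs hd hle).trans (add_le_add_right ?_ _)
      exact le_mul_of_one_le_left (zero_le) le_add_self
    · push Not at hle
      have hcd : ContinuousOn (fun t => dist (γ a) (γ t)) (Icc a b) := by fun_prop
      obtain ⟨t, ht, hth⟩ : h ∈ (fun t => dist (γ a) (γ t)) '' Icc a b :=
        intermediate_value_Icc hab hcd ⟨by simpa using hh.le, hle.le⟩
      simp only at hth
      obtain ⟨s', hs', hd'⟩ := hS (γ t)
      have hsplit := eVar_split γ ht.1 ht.2
      have hstep : ENNReal.ofReal h ≤ eVariationOn γ (Icc a t) := by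
        rw [← hth, ← edist_dist]
        exact eVariationOn.edist_le γ (left_mem_Icc.2 ht.1) (right_mem_Icc.2 ht.1)
      have hV' : eVariationOn γ (Icc t b) ≤ K * ENNReal.ofReal h := by
        have : ENNReal.ofReal h + eVariationOn γ (Icc t b) ≤
            ENNReal.ofReal h + K * ENNReal.ofReal h := by
          refine (add_le_add_left hstep _).trans ?_
          rw [hsplit]
          refine hV.trans (le_of_eq ?_)
          push_cast; ring
        exact (ENNReal.add_le_add_iff_left ENNReal.ofReal_ne_top).1 this
      have I := ih t s' ht.2 (hc.mono (Icc_subset_Icc_left ht.1)) hs' hd' hV'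
      have t1 : dist s s' ≤ dist (γ a) s + dist (γ a) s' := dist_triangle_left _ _ _
      have t2 : dist (γ a) s' ≤ dist (γ a) (γ t) + dist (γ t) s' := dist_triangle _ _ _
      have t3 : edist s s' ≤ ENNReal.ofReal h + ENNReal.ofReal (2 * e) := by
        rw [edist_dist, ← ENNReal.ofReal_add hh.le (by linarith)]
        exact ENNReal.ofReal_le_ofReal (by linarith)
      calc graphDist S r s (γ b) ≤ edist s s' + graphDist S r s' (γ b) :=
            graph_step hs (by linarith)
        _ ≤ (eVariationOn γ (Icc a t) + ENNReal.ofReal (2 * e)) +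
            (eVariationOn γ (Icc t b) + (K + 1) * ENNReal.ofReal (2 * e)) :=
            add_le_add (t3.trans (add_le_add_left hstep _)) I
        _ = _ := by rw [← hsplit]; push_cast; ring

lemma mesh_near {S : Finset X} {e : ℝ} (he : mesh S < ENNReal.ofReal e) (q : X) :
    ∃ s ∈ S, dist q s ≤ e := by
  have h : ⨅ s ∈ S, edist q s < ENNReal.ofReal e :=
    (le_iSup (fun q : X => ⨅ s ∈ S, edist q s) q).trans_lt he
  obtain ⟨s, hs⟩ := iInf_lt_iff.1 h
  obtain ⟨hsS, hs⟩ := iInf_lt_iff.1 hs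
  rw [edist_dist] at hs
  exact ⟨s, hsS, (ENNReal.ofReal_lt_ofReal_iff'.1 hs).1.le⟩

lemma upper {S : Finset X} {r c : ℝ} (hr : 0 < r) (hr1 : r ≤ 1) (hc : 0 < c) (hc4 : c ≤ 1 / 4)
    (hm : mesh S / ENNReal.ofReal r < ENNReal.ofReal c) (γ : ℝ → X)
    (hγ : ContinuousOn γ (Icc 0 1)) (h0 : γ 0 ∈ S) (h1 : γ 1 ∈ S)
    (L : ℝ) (hL0 : 0 ≤ L) (hL : eVariationOn γ (Icc 0 1) = ENNReal.ofReal L) :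
    graphDist S r (γ 0) (γ 1) ≤ ENNReal.ofReal (L + 4 * c * (L + 1)) := by
  have hm' : mesh S < ENNReal.ofReal (c * r) := by
    rw [ENNReal.ofReal_mul hc.le]
    exact (ENNReal.div_lt_iff (Or.inl (by simpa using hr)) (Or.inl ENNReal.ofReal_ne_top)).1 hm
  have hcr : 0 < c * r := by positivity
  have hK := Nat.le_ceil (2 * L / r)
  have hK2 := Nat.ceil_lt_add_one (a := 2 * L / r) (by positivity)
  set K := ⌈2 * L / r⌉₊ with hKdef
  have hV : eVariationOn γ (Icc 0 1) ≤ K * ENNReal.ofReal (r / 2) := by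
    rw [hL, ← ENNReal.ofReal_natCast, ← ENNReal.ofReal_mul (by positivity)]
    apply ENNReal.ofReal_le_ofReal
    rw [div_le_iff₀ hr] at hK
    linarith
  have := chain (S := S) (r := r) (h := r / 2) (e := c * r) (by positivity) hcr.le (by nlinarith)
    (mesh_near hm') γ 1 h1 K 0 (γ 0) zero_le_one hγ h0 (by simpa using hcr.le) hV
  refine this.trans ?_
  rw [hL, ← ENNReal.ofReal_natCast, ← ENNReal.ofReal_one, ← ENNReal.ofReal_add (by positivity)
    (by positivity), ← ENNReal.ofReal_mul (by positivity), ← ENNReal.ofReal_add hL0 (by positivity)]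
  apply ENNReal.ofReal_le_ofReal
  have e1 : (K : ℝ) * r ≤ 2 * L + r := by
    have : (K : ℝ) * r ≤ (2 * L / r + 1) * r := mul_le_mul_of_nonneg_right hK2.le hr.le
    rwa [add_mul, div_mul_cancel₀ _ hr.ne', one_mul] at this
  have e2 : ((K : ℝ) + 1) * r ≤ 2 * L + 2 := by linarith
  nlinarith [mul_le_mul_of_nonneg_left e2 hc.le]

lemma lower {S : Finset X} {r η : ℝ} (hη : 0 < η) (ω : X → X → ℝ)
    (hδL : ∀ q q' : X, intrinsicDist q q' = ENNReal.ofReal (dist q q' * (1 + ω q q')))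
    (hω : ∀ q q', dist q q' ≤ r → ω q q' ≤ η) (p p' : X) :
    intrinsicDist p p' ≤ ENNReal.ofReal (1 + η) * graphDist S r p p' := by
  unfold graphDist
  rw [ENNReal.mul_iInf_of_ne (by simp; linarith) ENNReal.ofReal_ne_top]
  refine le_iInf fun m => ?_
  rw [ENNReal.mul_iInf_of_ne (by simp; linarith) ENNReal.ofReal_ne_top]
  refine le_iInf fun f => ?_
  rw [ENNReal.mul_iInf_of_ne (by simp; linarith) ENNReal.ofReal_ne_top]
  refine le_iInf fun ⟨_, h0, hl, hr⟩ => ?_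
  rw [← h0, ← hl, Finset.mul_sum]
  refine (intrinsic_sum (fun q => by simp [hδL]) m f).trans (Finset.sum_le_sum fun i _ => ?_)
  rw [hδL, edist_dist, ← ENNReal.ofReal_mul (by linarith), mul_comm]
  apply ENNReal.ofReal_le_ofReal
  exact mul_le_mul_of_nonneg_right (by linarith [hω _ _ (hr i)]) dist_nonneg

lemma unif_omega [CompactSpace X] (ω : X → X → ℝ)
    (hωcont : Continuous fun z : X × X => ω z.1 z.2) (hω0 : ∀ q, ω q q = 0) {η : ℝ} (hη : 0 < η) :
    ∃ ρ > 0, ∀ q q', dist q q' < ρ → ω q q' ≤ η := by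
  have hu := CompactSpace.uniformContinuous_of_continuous hωcont
  obtain ⟨ρ, hρ, H⟩ := Metric.uniformContinuous_iff.1 hu η hη
  refine ⟨ρ, hρ, fun q q' h => ?_⟩
  have := H (a := (q, q')) (b := (q, q)) (by simpa [Prod.dist_eq, hρ, dist_comm] using h)
  rw [Real.dist_eq] at this
  simp only [hω0, sub_zero] at this
  exact (le_abs_self _).trans this.le

lemma compact_of_mesh [ProperSpace X] {S : Finset X} (h : mesh S < ENNReal.ofReal 1) :
    CompactSpace X := by
  rw [← isCompact_univ_iff]
  refine (S.finite_toSet.isCompact_biUnion fun s _ => isCompact_closedBall s 1).of_isClosed_subset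
    isClosed_univ fun q _ => ?_
  obtain ⟨s, hs, hd⟩ := mesh_near h q
  exact mem_biUnion hs (Metric.mem_closedBall.2 hd)

theorem stmt4 [ProperSpace X]
    (ω : X → X → ℝ) (hωcont : Continuous fun z : X × X => ω z.1 z.2)
    (hω0 : ∀ q, ω q q = 0)
    (hδL : ∀ q q' : X, intrinsicDist q q' = ENNReal.ofReal (dist q q' * (1 + ω q q')))
    (p p' : X) (hfin : intrinsicDist p p' ≠ ∞)
    (S : ℕ → Finset X) (hpS : ∀ n, p ∈ S n) (hp'S : ∀ n, p' ∈ S n)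
    (r : ℕ → ℝ) (hrpos : ∀ n, 0 < r n) (hr0 : Tendsto r atTop (𝓝 0))
    (hmesh : Tendsto (fun n => mesh (S n)) atTop (𝓝 0))
    (hratio : Tendsto (fun n => mesh (S n) / ENNReal.ofReal (r n)) atTop (𝓝 0)) :
    Tendsto (fun n => graphDist (S n) (r n) p p') atTop (𝓝 (intrinsicDist p p')) := by
  have : CompactSpace X := by
    obtain ⟨n, hn⟩ := (hmesh.eventually_lt_const (show (0 : ℝ≥0∞) < ENNReal.ofReal 1 by simp)).exists
    exact compact_of_mesh hn
  rw [tendsto_order]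
  constructor
  · intro a ha
    have hcont : Tendsto (fun η : ℝ => ENNReal.ofReal (1 + η) * a) (𝓝[>] 0) (𝓝 a) := by
      have : Tendsto (fun η : ℝ => ENNReal.ofReal (1 + η)) (𝓝 0) (𝓝 1) := by
        have h : Continuous fun η : ℝ => ENNReal.ofReal (1 + η) :=
          ENNReal.continuous_ofReal.comp (by fun_prop)
        simpa using h.tendsto 0
      have := ENNReal.Tendsto.mul_const (b := a) this (Or.inl one_ne_zero)
      rw [one_mul] at this
      exact this.mono_left nhdsWithin_le_nhds
    obtain ⟨η, hη, hpos⟩ := ((hcont.eventually (gt_mem_nhds ha)).and self_mem_nhdsWithin).exists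
    have hpos : 0 < η := hpos
    obtain ⟨ρ, hρ, H⟩ := unif_omega ω hωcont hω0 hpos
    filter_upwards [hr0.eventually (gt_mem_nhds hρ)] with n hn
    by_contra! hle
    have := lower (S := S n) (r := r n) hpos ω hδL (fun q q' h => H q q' (h.trans_lt hn)) p p'
    exact absurd (this.trans (by gcongr)) (not_le.2 hη)
  · intro b hb
    obtain ⟨γ, hγ⟩ := iInf_lt_iff.1 hb
    obtain ⟨⟨hc, h0, h1⟩, hγ⟩ := iInf_lt_iff.1 hγ
    rw [pathLength_eq] at hγ
    have hL := (ENNReal.ofReal_toReal hγ.ne_top).symm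
    set L := (eVariationOn γ (Icc 0 1)).toReal with hLdef
    have hL0 : 0 ≤ L := ENNReal.toReal_nonneg
    have hcont : Tendsto (fun c : ℝ => ENNReal.ofReal (L + 4 * c * (L + 1))) (𝓝[>] 0)
        (𝓝 (ENNReal.ofReal L)) := by
      have h : Continuous fun c : ℝ => ENNReal.ofReal (L + 4 * c * (L + 1)) :=
        ENNReal.continuous_ofReal.comp (by fun_prop)
      have := h.tendsto 0
      simp only [mul_zero, zero_mul, add_zero] at this
      exact this.mono_left nhdsWithin_le_nhds
    have h4 : ∀ᶠ c : ℝ in 𝓝[>] 0, c < 1 / 4 :=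
      nhdsWithin_le_nhds (gt_mem_nhds (by norm_num))
    rw [hL] at hγ
    obtain ⟨c, ⟨hcb, hc4⟩, hpos⟩ :=
      (((hcont.eventually (gt_mem_nhds hγ)).and h4).and self_mem_nhdsWithin).exists
    have hpos : 0 < c := hpos
    filter_upwards [hr0.eventually (gt_mem_nhds one_pos),
      hratio.eventually_lt_const (show (0 : ℝ≥0∞) < ENNReal.ofReal c by simpa using hpos)] with n hn hm
    have := upper (hrpos n) hn.le hpos hc4.le hm γ hc (h0 ▸ hpS n) (h1 ▸ hp'S n) L hL0 hL
    rw [h0, h1] at this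
    exact this.trans_lt hcb

end Stmt4
end
end

section
/- Let (X, δ) be a proper metric space (every closed ball is compact), and suppose the intrinsic metric δ_L satisfies δ_L(q,q') = δ(q,q')·(1 + ω(q,q')) for all q,q' ∈ X with ω continuous and ω(q,q) = 0. Fix p, p' ∈ X with δ_L(p,p') < ∞. For each n, let S_n ⊂ X be a finite set containing p and p', with ε_n = sup_{q ∈ X} min_{s ∈ S_n} δ(q,s) → 0, and let r_n → 0 with ε_n / r_n → 0. Let δ̂_n : S_n × S_n → ℝ₊ be symmetric functions such that η_n := max_{s ≠ s' ∈ S_n} |δ̂_n(s,s') − δ(s,s')| / δ(s,s') → 0 as n → ∞. Let d̂_n(p,p') be the shortest-path distance between p and p' in the graph with vertex set S_n, edges {(s,s') : δ̂_n(s,s') ≤ r_n}, and edge weights δ̂_n(s,s'). Then d̂_n(p,p') → δ_L(p,p') as n → ∞. -/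
open Filter Set
open scoped ENNReal BigOperators Topology

noncomputable section

namespace Stmt5

variable {X : Type*} [MetricSpace X]

/-- The length of a path `γ : [0,1] → X`: the supremum over partitions
`0 = t₀ < t₁ < ⋯ < t_k = 1` of the sum of distances between consecutive images. -/
def pathLength (γ : ℝ → X) : ℝ≥0∞ :=
  ⨆ (k : ℕ) (t : Fin (k + 1) → ℝ)
    (_ : StrictMono t ∧ t 0 = 0 ∧ t (Fin.last k) = 1),
    ∑ i : Fin k, edist (γ (t i.castSucc)) (γ (t i.succ))

/-- The intrinsic (inner) metric induced by the metric of `X`. -/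
def intrinsicDist (a b : X) : ℝ≥0∞ :=
  ⨅ (γ : ℝ → X) (_ : ContinuousOn γ (Icc 0 1) ∧ γ 0 = a ∧ γ 1 = b), pathLength γ

/-- The mesh `ε = sup_q min_{s ∈ S} δ(q, s)` of a finite set `S` in `X`. -/
def mesh (S : Finset X) : ℝ≥0∞ :=
  ⨆ q : X, ⨅ s ∈ S, edist q s

/-- The shortest-path distance between `a` and `b` in the graph with vertex set `S`,
an edge between `s, s'` whenever `w s s' ≤ r`, and edge weights `w s s'`
(`∞` if `a` and `b` are not connected). -/
def graphDistW (S : Finset X) (w : X → X → ℝ) (r : ℝ) (a b : X) : ℝ≥0∞ :=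
  ⨅ (m : ℕ) (f : Fin (m + 1) → X)
    (_ : (∀ i, f i ∈ S) ∧ f 0 = a ∧ f (Fin.last m) = b ∧
      ∀ i : Fin m, w (f i.castSucc) (f i.succ) ≤ r),
    ∑ i : Fin m, ENNReal.ofReal (w (f i.castSucc) (f i.succ))

theorem extend_part (γ : ℝ → X) (k : ℕ) (t : Fin (k+1) → ℝ) (hm : StrictMono t) (h0 : t 0 = 0)
    (y : ℝ) (hy : t (Fin.last k) ≤ y) :
    ∃ (k' : ℕ) (t' : Fin (k'+1) → ℝ), StrictMono t' ∧ t' 0 = 0 ∧ t' (Fin.last k') = y ∧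
      (∑ i : Fin k, edist (γ (t i.castSucc)) (γ (t i.succ))) + edist (γ (t (Fin.last k))) (γ y)
      ≤ ∑ i : Fin k', edist (γ (t' i.castSucc)) (γ (t' i.succ)) := by
  rcases hy.eq_or_lt with h | h
  · exact ⟨k, t, hm, h0, h, by simp [h]⟩
  · refine ⟨k+1, Fin.snoc (α := fun _ => ℝ) t y, ?_, ?_, ?_, ?_⟩
    · rw [Fin.strictMono_iff_lt_succ]
      intro i
      refine Fin.lastCases ?_ (fun j => ?_) i
      · rw [Fin.succ_last, Fin.snoc_last, Fin.snoc_castSucc]; exact h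
      · rw [Fin.succ_castSucc, Fin.snoc_castSucc, Fin.snoc_castSucc]
        exact hm (Fin.castSucc_lt_succ)
    · rw [← Fin.castSucc_zero, Fin.snoc_castSucc]; exact h0
    · rw [Fin.snoc_last]
    · rw [Fin.sum_univ_castSucc]
      apply le_of_eq
      congr 1
      · refine Finset.sum_congr rfl (fun j _ => ?_)
        rw [Fin.succ_castSucc, Fin.snoc_castSucc, Fin.snoc_castSucc]
      · rw [Fin.succ_last, Fin.snoc_last, Fin.snoc_castSucc]

theorem part_of_mono (γ : ℝ → X) (u : ℕ → ℝ) (hu : Monotone u) (h0 : 0 ≤ u 0) (n : ℕ) :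
    ∃ (k' : ℕ) (t' : Fin (k'+1) → ℝ), StrictMono t' ∧ t' 0 = 0 ∧ t' (Fin.last k') = u n ∧
      (∑ i ∈ Finset.range n, edist (γ (u (i+1))) (γ (u i)))
      ≤ ∑ i : Fin k', edist (γ (t' i.castSucc)) (γ (t' i.succ)) := by
  induction n with
  | zero =>
    obtain ⟨k, t, h1, h2, h3, h4⟩ := extend_part γ 0 (fun _ => 0)
      (by intro a b hab; omega) rfl (u 0) h0
    exact ⟨k, t, h1, h2, h3, by simp⟩
  | succ n ih =>
    obtain ⟨k, t, h1, h2, h3, h4⟩ := ih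
    obtain ⟨k', t', h1', h2', h3', h4'⟩ := extend_part γ k t h1 h2 (u (n+1))
      (by rw [h3]; exact hu (Nat.le_succ n))
    refine ⟨k', t', h1', h2', h3', le_trans ?_ h4'⟩
    rw [Finset.sum_range_succ, h3, edist_comm (γ (u (n+1)))]
    gcongr

theorem pathLength_eq (γ : ℝ → X) : pathLength γ = eVariationOn γ (Icc 0 1) := by
  apply le_antisymm
  · refine iSup_le fun k => iSup_le fun t => iSup_le fun ⟨hm, h0, h1⟩ => ?_
    have hmono : Monotone (fun i : ℕ => t ⟨min i k, by omega⟩) := by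
      intro a b hab
      apply hm.monotone
      simp only [Fin.mk_le_mk]; omega
    have := eVariationOn.sum_le (f := γ) (s := Icc 0 1) (n := k) hmono (fun i => by
      constructor
      · rw [← h0]; exact hm.monotone (Fin.zero_le _)
      · rw [← h1]; exact hm.monotone (Fin.le_last _))
    refine le_trans (le_of_eq ?_) this
    rw [Finset.sum_range]
    refine Finset.sum_congr rfl fun i _ => ?_
    rw [edist_comm]
    congr 3
    · ext; simp
    · ext; simp
  · refine iSup_le fun ⟨n, u, hu, hus⟩ => ?_
    obtain ⟨k, t, h1, h2, h3, h4⟩ := part_of_mono γ u hu (hus 0).1 n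
    obtain ⟨k', t', h1', h2', h3', h4'⟩ := extend_part γ k t h1 h2 1 (by rw [h3]; exact (hus n).2)
    refine le_trans (le_trans h4 (le_trans le_self_add h4')) ?_
    exact le_iSup_of_le k' (le_iSup_of_le t' (le_iSup_of_le ⟨h1', h2', h3'⟩ le_rfl))

theorem intrinsic_tri (a b c : X) :
    intrinsicDist a c ≤ intrinsicDist a b + intrinsicDist b c := by
  have key : ∀ γ₁ γ₂ : ℝ → X, ContinuousOn γ₁ (Icc 0 1) ∧ γ₁ 0 = a ∧ γ₁ 1 = b →
      ContinuousOn γ₂ (Icc 0 1) ∧ γ₂ 0 = b ∧ γ₂ 1 = c →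
      intrinsicDist a c ≤ pathLength γ₁ + pathLength γ₂ := by
    rintro γ₁ γ₂ ⟨hc1, h10, h11⟩ ⟨hc2, h20, h21⟩
    let γ : ℝ → X := fun t => if t ≤ 1/2 then γ₁ (2*t) else γ₂ (2*t-1)
    have e1 : EqOn γ (γ₁ ∘ fun t => 2*t) (Icc 0 (1/2)) := fun t ht => by
      simp only [γ, Function.comp]; rw [if_pos ht.2]
    have e2 : EqOn γ (γ₂ ∘ fun t => 2*t-1) (Icc (1/2) 1) := fun t ht => by
      simp only [γ, Function.comp]
      split_ifs with h
      · have : t = 1/2 := le_antisymm h ht.1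
        subst this
        norm_num [h11, h20]
      · rfl
    have m1 : MapsTo (fun t : ℝ => 2*t) (Icc 0 (1/2)) (Icc 0 1) := fun t ht => by
      constructor <;> [linarith [ht.1]; linarith [ht.2]]
    have m2 : MapsTo (fun t : ℝ => 2*t-1) (Icc (1/2) 1) (Icc 0 1) := fun t ht => by
      constructor <;> [linarith [ht.1]; linarith [ht.2]]
    have hU : Icc (0:ℝ) 1 = Icc 0 (1/2) ∪ Icc (1/2) 1 :=
      (Icc_union_Icc_eq_Icc (by norm_num) (by norm_num)).symm
    have hcont : ContinuousOn γ (Icc 0 1) := by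
      rw [hU]
      refine ContinuousOn.union_of_isClosed ?_ ?_ isClosed_Icc isClosed_Icc
      · exact (hc1.comp (by fun_prop) m1).congr e1
      · exact (hc2.comp (by fun_prop) m2).congr e2
    have hg0 : γ 0 = a := by simp [γ, h10]
    have hg1 : γ 1 = c := by simp only [γ]; norm_num [h21]
    refine le_trans (iInf₂_le γ ⟨hcont, hg0, hg1⟩) ?_
    rw [pathLength_eq, pathLength_eq, pathLength_eq, hU,
      eVariationOn.union γ (x := 1/2) (isGreatest_Icc (by norm_num)) (isLeast_Icc (by norm_num)),
      eVariationOn.eq_of_eqOn e1, eVariationOn.eq_of_eqOn e2]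
    refine add_le_add ?_ ?_
    · rw [← hU]
      exact eVariationOn.comp_le_of_monotoneOn _ _ (fun x _ y _ h => by simpa using h) m1
    · rw [← hU]
      exact eVariationOn.comp_le_of_monotoneOn _ _ (fun x _ y _ h => by simpa using h) m2
  conv_rhs => unfold intrinsicDist
  refine ENNReal.le_of_forall_pos_le_add ?_ |>.trans le_rfl
  intro ε hε hlt
  have hA := (ENNReal.add_lt_top.1 hlt).1
  have hB := (ENNReal.add_lt_top.1 hlt).2
  have hε2 : (ε / 2 : ℝ≥0∞) ≠ 0 := by simp [hε.ne']
  obtain ⟨γ₁, h1⟩ := iInf_lt_iff.1 (ENNReal.lt_add_right hA.ne hε2)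
  obtain ⟨p1, h1⟩ := iInf_lt_iff.1 h1
  obtain ⟨γ₂, h2⟩ := iInf_lt_iff.1 (ENNReal.lt_add_right hB.ne hε2)
  obtain ⟨p2, h2⟩ := iInf_lt_iff.1 h2
  refine (key γ₁ γ₂ p1 p2).trans ((add_le_add h1.le h2.le).trans (le_of_eq ?_))
  rw [add_add_add_comm, ENNReal.add_halves]

theorem intrinsic_chain (h0 : ∀ q : X, intrinsicDist q q = 0) (m : ℕ) (f : Fin (m+1) → X) :
    intrinsicDist (f 0) (f (Fin.last m)) ≤
      ∑ i : Fin m, intrinsicDist (f i.castSucc) (f i.succ) := by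
  induction m with
  | zero => simp [h0]
  | succ m ih =>
    rw [Fin.sum_univ_castSucc]
    refine (intrinsic_tri _ (f (Fin.last m).castSucc) _).trans ?_
    refine add_le_add ?_ (by rw [Fin.succ_last])
    exact ih (fun i => f i.castSucc)

theorem graph_self (S : Finset X) (w : X → X → ℝ) (r : ℝ) (a : X) (ha : a ∈ S) :
    graphDistW S w r a a = 0 := by
  refine le_antisymm ?_ bot_le
  refine iInf_le_of_le 0 (iInf_le_of_le (fun _ => a) (iInf_le_of_le ?_ ?_))
  · exact ⟨fun _ => ha, rfl, rfl, fun i => i.elim0⟩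
  · simp

theorem graph_cons (S : Finset X) (w : X → X → ℝ) (r : ℝ) (a b c : X) (ha : a ∈ S)
    (hw : w a b ≤ r) :
    graphDistW S w r a c ≤ ENNReal.ofReal (w a b) + graphDistW S w r b c := by
  conv_rhs => unfold graphDistW
  simp only [ENNReal.add_iInf]
  refine le_iInf fun m => le_iInf fun f => le_iInf fun ⟨h1, h2, h3, h4⟩ => ?_
  refine iInf_le_of_le (m+1) (iInf_le_of_le (Fin.cons (α := fun _ => X) a f) (iInf_le_of_le ?_ ?_))
  · refine ⟨fun i => ?_, rfl, ?_, fun i => ?_⟩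
    · refine Fin.cases ha (fun j => ?_) i
      simpa using h1 j
    · rw [← Fin.succ_last, Fin.cons_succ, h3]
    · refine Fin.cases ?_ (fun j => ?_) i
      · simpa [h2] using hw
      · rw [← Fin.succ_castSucc, Fin.cons_succ, Fin.cons_succ]; exact h4 j
  · rw [Fin.sum_univ_succ]
    refine add_le_add (by simp [h2]) ?_
    refine Finset.sum_le_sum fun j _ => ?_
    rw [← Fin.succ_castSucc, Fin.cons_succ, Fin.cons_succ]

theorem upper_aux (S : Finset X) (w : X → X → ℝ) (r c e ρ : ℝ) (hc : 0 ≤ c) (he : 0 ≤ e)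
    (hρ : 0 < ρ) (hr : (1 + c) * (ρ + 2 * e) ≤ r)
    (hnear : ∀ q : X, ∃ s ∈ S, dist q s ≤ e)
    (herr : ∀ s ∈ S, ∀ s' ∈ S, s ≠ s' → |w s s' - dist s s'| ≤ c * dist s s')
    (γ : ℝ → X) (hγ : ContinuousOn γ (Icc 0 1)) (p' : X) (hp' : p' ∈ S) (h1 : γ 1 = p')
    (N : ℕ) : ∀ (a : ℝ) (_ : a ∈ Icc (0:ℝ) 1) (s : X) (_ : s ∈ S) (_ : dist (γ a) s ≤ e)
    (_ : eVariationOn γ (Icc a 1) ≤ ENNReal.ofReal (N * ρ)),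
    graphDistW S w r s p' ≤ ENNReal.ofReal (1 + c) *
      (eVariationOn γ (Icc a 1) + (N + 1) * ENNReal.ofReal (2 * e)) := by
  have step : ∀ (x y s s' : X), s ∈ S → s' ∈ S → dist x s ≤ e → dist y s' ≤ e → dist x y ≤ ρ →
      graphDistW S w r s p' ≤ ENNReal.ofReal (1 + c) * (edist x y + ENNReal.ofReal (2*e)) +
        graphDistW S w r s' p' := by
    intro x y s s' hs hs' hx hy hxy
    by_cases hss : s = s'
    · subst hss; exact le_add_self
    have hd : dist s s' ≤ dist x y + 2 * e := by
      have := dist_triangle4 s x y s'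
      rw [dist_comm s x] at this
      linarith
    have hw : w s s' ≤ (1 + c) * (dist x y + 2 * e) := by
      have := (abs_le.1 (herr s hs s' hs' hss)).2
      have : w s s' ≤ (1 + c) * dist s s' := by linarith
      exact this.trans (by gcongr)
    refine (graph_cons S w r s s' p' hs (hw.trans (le_trans (by gcongr) hr))).trans ?_
    refine add_le_add_left ?_ _
    rw [edist_dist, ← ENNReal.ofReal_add dist_nonneg (by linarith), ← ENNReal.ofReal_mul (by linarith)]
    exact ENNReal.ofReal_le_ofReal hw
  have last : ∀ a ∈ Icc (0:ℝ) 1, ∀ s ∈ S, dist (γ a) s ≤ e → dist (γ a) (γ 1) ≤ ρ →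
      graphDistW S w r s p' ≤ ENNReal.ofReal (1 + c) *
      (eVariationOn γ (Icc a 1) + ENNReal.ofReal (2 * e)) := by
    intro a ha s hs hd hle
    have := step (γ a) (γ 1) s p' hs hp' hd (by rw [h1, dist_self]; exact he) hle
    rw [graph_self S w r p' hp', add_zero] at this
    refine this.trans ?_
    gcongr
    exact eVariationOn.edist_le γ ⟨le_rfl, ha.2⟩ ⟨ha.2, le_rfl⟩
  induction N with
  | zero =>
    intro a ha s hs hd hv
    have h0 : edist (γ a) (γ 1) ≤ 0 :=
      (eVariationOn.edist_le γ (s := Icc a 1) ⟨le_rfl, ha.2⟩ ⟨ha.2, le_rfl⟩).trans (by simpa using hv)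
    have h0' : dist (γ a) (γ 1) ≤ ρ := by
      rw [edist_dist, nonpos_iff_eq_zero, ENNReal.ofReal_eq_zero] at h0; linarith
    simpa using last a ha s hs hd h0'
  | succ N ih =>
    intro a ha s hs hd hv
    by_cases hle : dist (γ a) (γ 1) ≤ ρ
    · refine (last a ha s hs hd hle).trans ?_
      gcongr
      exact le_mul_of_one_le_left bot_le le_add_self
    · push Not at hle
      have hcd : ContinuousOn (fun t => dist (γ a) (γ t)) (Icc a 1) :=
        (continuous_const.dist continuous_id).comp_continuousOn (hγ.mono (Icc_subset_Icc_left ha.1))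
      obtain ⟨b, hb, hbρ⟩ := intermediate_value_Icc ha.2 hcd
        (show ρ ∈ Icc _ _ from ⟨by simpa using hρ.le, hle.le⟩)
      simp only at hbρ
      obtain ⟨s', hs', hd'⟩ := hnear (γ b)
      have hsplit : eVariationOn γ (Icc a b) + eVariationOn γ (Icc b 1)
          = eVariationOn γ (Icc a 1) := by
        rw [← eVariationOn.union γ (x := b) (isGreatest_Icc hb.1) (isLeast_Icc hb.2),
          Icc_union_Icc_eq_Icc hb.1 hb.2]
      have hab : edist (γ a) (γ b) ≤ eVariationOn γ (Icc a b) :=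
        eVariationOn.edist_le γ ⟨le_rfl, hb.1⟩ ⟨hb.1, le_rfl⟩
      have hv' : eVariationOn γ (Icc b 1) ≤ ENNReal.ofReal (N * ρ) := by
        have h2 : ENNReal.ofReal ρ + eVariationOn γ (Icc b 1) ≤
            ENNReal.ofReal ρ + ENNReal.ofReal (N * ρ) := by
          rw [← ENNReal.ofReal_add hρ.le (by positivity)]
          calc _ ≤ eVariationOn γ (Icc a b) + eVariationOn γ (Icc b 1) := by
                gcongr; rw [← hbρ, ← edist_dist]; exact hab
            _ ≤ _ := by
                rw [hsplit]; refine hv.trans (le_of_eq ?_); congr 1; push_cast; ring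
        exact (ENNReal.add_le_add_iff_left ENNReal.ofReal_ne_top).1 h2
      have hI := ih b ⟨ha.1.trans hb.1, hb.2⟩ s' hs' hd' hv'
      refine (step (γ a) (γ b) s s' hs hs' hd hd' hbρ.le).trans ?_
      refine (add_le_add_right hI _).trans ?_
      rw [← mul_add, ← hsplit]
      refine mul_le_mul_right ?_ _
      calc _ ≤ eVariationOn γ (Icc a b) + ENNReal.ofReal (2 * e) +
            (eVariationOn γ (Icc b 1) + (N + 1) * ENNReal.ofReal (2 * e)) := by gcongr
        _ = _ := by push_cast; ring

theorem mesh_near (S : Finset X) (e : ℝ) (h : mesh S < ENNReal.ofReal e) (q : X) :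
    ∃ s ∈ S, dist q s ≤ e := by
  have h1 : (⨅ s ∈ S, edist q s) < ENNReal.ofReal e :=
    lt_of_le_of_lt (le_iSup (fun q => ⨅ s ∈ S, edist q s) q) h
  obtain ⟨s, h1⟩ := iInf_lt_iff.1 h1
  obtain ⟨hs, h1⟩ := iInf_lt_iff.1 h1
  refine ⟨s, hs, ?_⟩
  rw [edist_dist] at h1
  exact (ENNReal.ofReal_lt_ofReal_iff'.1 h1).1.le

theorem stmt5 [ProperSpace X]
    (ω : X → X → ℝ) (hωcont : Continuous fun z : X × X => ω z.1 z.2)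
    (hω0 : ∀ q, ω q q = 0)
    (hδL : ∀ q q' : X, intrinsicDist q q' = ENNReal.ofReal (dist q q' * (1 + ω q q')))
    (p p' : X) (hfin : intrinsicDist p p' ≠ ∞)
    (S : ℕ → Finset X) (hpS : ∀ n, p ∈ S n) (hp'S : ∀ n, p' ∈ S n)
    (r : ℕ → ℝ) (hrpos : ∀ n, 0 < r n) (hr0 : Tendsto r atTop (𝓝 0))
    (hmesh : Tendsto (fun n => mesh (S n)) atTop (𝓝 0))
    (hratio : Tendsto (fun n => mesh (S n) / ENNReal.ofReal (r n)) atTop (𝓝 0))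
    -- the estimated dissimilarities δ̂ₙ on `S n`
    (dh : ℕ → X → X → ℝ)
    (hdh_symm : ∀ n, ∀ s ∈ S n, ∀ s' ∈ S n, dh n s s' = dh n s' s)
    (hdh_nonneg : ∀ n, ∀ s ∈ S n, ∀ s' ∈ S n, 0 ≤ dh n s s')
    -- uniform relative consistency: `max_{s ≠ s'} |δ̂ₙ(s,s') − δ(s,s')| / δ(s,s') → 0`
    (η : ℕ → ℝ) (hη : Tendsto η atTop (𝓝 0))
    (herr : ∀ n, ∀ s ∈ S n, ∀ s' ∈ S n, s ≠ s' →
      |dh n s s' - dist s s'| ≤ η n * dist s s') :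
    Tendsto (fun n => graphDistW (S n) (dh n) (r n) p p') atTop
      (𝓝 (intrinsicDist p p')) := by
  classical
  -- compactness
  have hcomp : CompactSpace X := by
    have : ∀ᶠ n in atTop, mesh (S n) < ENNReal.ofReal 1 :=
      hmesh.eventually (gt_mem_nhds (by simp))
    obtain ⟨n, hn⟩ := this.exists
    refine ⟨?_⟩
    have hU : (univ : Set X) = ⋃ s ∈ S n, Metric.closedBall s 1 := by
      symm; rw [eq_univ_iff_forall]
      intro q
      obtain ⟨s, hs, hd⟩ := mesh_near (S n) 1 hn q
      exact mem_iUnion₂.2 ⟨s, hs, hd⟩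
    rw [hU]
    exact (S n).isCompact_biUnion fun s _ => isCompact_closedBall s 1
  have hI0 : ∀ q : X, intrinsicDist q q = 0 := fun q => by rw [hδL]; simp
  have herr' : ∀ c : ℝ, 0 < c → ∀ᶠ n in atTop, ∀ s ∈ S n, ∀ s' ∈ S n, s ≠ s' →
      |dh n s s' - dist s s'| ≤ c * dist s s' := by
    intro c hc
    filter_upwards [hη.eventually (gt_mem_nhds hc)] with n hn s hs s' hs' hne
    exact (herr n s hs s' hs' hne).trans (by gcongr)
  refine tendsto_order.2 ⟨fun a ha => ?_, fun a ha => ?_⟩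
  · -- lower bound
    have hlim : Tendsto (fun c : ℝ => ENNReal.ofReal ((1 + c) / (1 - c)) * a) (𝓝[>] 0)
        (𝓝 (ENNReal.ofReal ((1 + 0) / (1 - 0)) * a)) := by
      refine ENNReal.Tendsto.mul_const ?_ (Or.inr (ha.trans_le le_top).ne)
      refine ENNReal.tendsto_ofReal (tendsto_nhdsWithin_of_tendsto_nhds ?_)
      refine ContinuousAt.div (by fun_prop) (by fun_prop) (by norm_num)
    have h1 := hlim.eventually_lt_const (u := intrinsicDist p p') (by simpa using ha)
    have h2 : ∀ᶠ c : ℝ in 𝓝[>] 0, c < 1/2 := nhdsWithin_le_nhds (gt_mem_nhds (by norm_num))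
    obtain ⟨c, hc1, hc2, hc0⟩ := (h1.and (h2.and self_mem_nhdsWithin)).exists
    have hc0 : 0 < c := hc0
    have hu : UniformContinuous fun z : X × X => ω z.1 z.2 :=
      CompactSpace.uniformContinuous_of_continuous hωcont
    obtain ⟨d, hd, hud⟩ := Metric.uniformContinuous_iff.1 hu c hc0
    have hr : ∀ᶠ n in atTop, r n < d / 2 := hr0.eventually (gt_mem_nhds (by positivity))
    filter_upwards [herr' c hc0, hr] with n hn hrn
    have hK : 0 < (1 + c) / (1 - c) := by
      apply div_pos <;> linarith
    have main : intrinsicDist p p' ≤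
        ENNReal.ofReal ((1 + c) / (1 - c)) * graphDistW (S n) (dh n) (r n) p p' := by
      unfold graphDistW
      have hne0 : ENNReal.ofReal ((1 + c) / (1 - c)) ≠ 0 := by simpa using hK
      simp only [ENNReal.mul_iInf_of_ne hne0 ENNReal.ofReal_ne_top]
      refine le_iInf fun m => le_iInf fun f => le_iInf fun ⟨hf, h0, h1, hw⟩ => ?_
      rw [← h0, ← h1, Finset.mul_sum]
      refine (intrinsic_chain hI0 m f).trans (Finset.sum_le_sum fun i _ => ?_)
      by_cases hne : f i.castSucc = f i.succ
      · rw [hne, hI0]; exact bot_le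
      have hab := (abs_le.1 (hn _ (hf i.castSucc) _ (hf i.succ) hne)).1
      have hwi := hw i
      generalize f i.castSucc = x at *
      generalize f i.succ = y at *
      have hxy : (1 - c) * dist x y ≤ dh n x y := by linarith
      have hlt : dist x y < d := by nlinarith [dist_nonneg (x := x) (y := y)]
      have hω : ω x y ≤ c := by
        have := hud (a := (x, y)) (b := (x, x)) (by
          rw [Prod.dist_eq]; simpa [dist_comm y x] using hlt)
        simp only [hω0, Real.dist_eq, sub_zero] at this
        exact (le_abs_self _).trans this.le
      rw [hδL, ← ENNReal.ofReal_mul hK.le]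
      refine ENNReal.ofReal_le_ofReal ?_
      calc dist x y * (1 + ω x y) ≤ dist x y * (1 + c) := by gcongr
        _ = (1 + c) / (1 - c) * ((1 - c) * dist x y) := by
          have : 1 - c ≠ 0 := by linarith
          field_simp
        _ ≤ _ := by gcongr
    by_contra hcon
    push Not at hcon
    exact absurd (main.trans (mul_le_mul_right hcon _)) (not_le.2 hc1)
  · -- upper bound
    obtain ⟨γ, hγ⟩ := iInf_lt_iff.1 ha
    obtain ⟨⟨hcont, hg0, hg1⟩, hγ⟩ := iInf_lt_iff.1 hγ
    have hLtop : pathLength γ ≠ ∞ := (hγ.trans_le le_top).ne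
    obtain ⟨L, hL0, hL⟩ : ∃ L : ℝ, 0 ≤ L ∧ pathLength γ = ENNReal.ofReal L :=
      ⟨(pathLength γ).toReal, ENNReal.toReal_nonneg, (ENNReal.ofReal_toReal hLtop).symm⟩
    have hlim : Tendsto (fun c : ℝ => ENNReal.ofReal ((1 + c) * (L + 4 * c * L + 4 * c)))
        (𝓝[>] 0) (𝓝 (ENNReal.ofReal ((1 + 0) * (L + 4 * 0 * L + 4 * 0)))) := by
      refine ENNReal.tendsto_ofReal (tendsto_nhdsWithin_of_tendsto_nhds ?_)
      exact Continuous.tendsto (f := fun c : ℝ => (1 + c) * (L + 4 * c * L + 4 * c))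
        (by fun_prop) 0
    have h1 := hlim.eventually_lt_const (u := a) (by simpa [← hL] using hγ)
    have h2 : ∀ᶠ c : ℝ in 𝓝[>] 0, c < 1/8 := nhdsWithin_le_nhds (gt_mem_nhds (by norm_num))
    obtain ⟨c, hc1, hc2, hc0⟩ := (h1.and (h2.and self_mem_nhdsWithin)).exists
    have hc0 : 0 < c := hc0
    have hm : ∀ᶠ n in atTop, mesh (S n) / ENNReal.ofReal (r n) < ENNReal.ofReal c :=
      hratio.eventually (gt_mem_nhds (by simpa using hc0))
    have hr : ∀ᶠ n in atTop, r n < 1 := hr0.eventually (gt_mem_nhds (by positivity))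
    filter_upwards [herr' c hc0, hr, hm] with n hn hrn hmn
    have hrp := hrpos n
    have hmn' : mesh (S n) < ENNReal.ofReal (c * r n) := by
      rw [ENNReal.ofReal_mul hc0.le]
      exact (ENNReal.div_lt_iff (Or.inl (by simpa using hrp)) (Or.inl ENNReal.ofReal_ne_top)).1 hmn
    refine lt_of_le_of_lt ?_ hc1
    have hN : L ≤ ⌈L / (r n / 2)⌉₊ * (r n / 2) := by
      rw [← div_le_iff₀ (by positivity)]; exact Nat.le_ceil _
    have hN2 : (⌈L / (r n / 2)⌉₊ : ℝ) ≤ L / (r n / 2) + 1 :=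
      (Nat.ceil_lt_add_one (by positivity)).le
    generalize ⌈L / (r n / 2)⌉₊ = N at *
    have key := upper_aux (S n) (dh n) (r n) c (c * r n) (r n / 2) hc0.le (by positivity)
      (by positivity) (by
        calc (1 + c) * (r n / 2 + 2 * (c * r n)) ≤ (1 + 1/8) * (r n / 2 + 2 * (1/8 * r n)) := by
              gcongr
          _ ≤ r n := by linarith) (mesh_near _ _ hmn') hn γ hcont p' (hp'S n) hg1 N 0
      (by simp) p (hpS n) (by rw [hg0, dist_self]; positivity)
      (by rw [← pathLength_eq, hL]; exact ENNReal.ofReal_le_ofReal hN)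
    refine key.trans ?_
    rw [← pathLength_eq, hL]
    have : ((N : ℝ≥0∞) + 1) = ENNReal.ofReal (N + 1) := by
      rw [ENNReal.ofReal_add (by positivity) zero_le_one]; simp
    rw [this, ← ENNReal.ofReal_mul (by positivity), ← ENNReal.ofReal_add hL0 (by positivity),
      ← ENNReal.ofReal_mul (by positivity)]
    refine ENNReal.ofReal_le_ofReal ?_
    have : ((N:ℝ) + 1) * (2 * (c * r n)) ≤ 4 * c * L + 4 * c := by
      calc ((N:ℝ) + 1) * (2 * (c * r n)) ≤ (L / (r n / 2) + 1 + 1) * (2 * (c * r n)) := by gcongr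
        _ = 4 * c * L + 4 * c * r n := by field_simp; ring
        _ ≤ _ := by nlinarith
    have : L + ((N:ℝ) + 1) * (2 * (c * r n)) ≤ L + 4 * c * L + 4 * c := by linarith
    gcongr

end Stmt5
end
end

section
/- Let P be a Borel probability measure on an interval (a₁,a₂) ⊆ ℝ with a Lebesgue density f, and let θ, θ₀ : (a₁,a₂) → (b₁,b₂) be strictly increasing continuous bijections onto an interval (b₁,b₂) ⊆ ℝ such that ∫ θ(x)² f(x) dx < ∞ and ∫ θ₀(x)² f(x) dx < ∞. Then the squared Wasserstein distance between the pushforward measures satisfies W₂( θ_* P, (θ₀)_* P )² = ∫ ( θ(x) − θ₀(x) )² f(x) dx. -/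
open MeasureTheory Set
open scoped ENNReal

noncomputable section

namespace Stmt16

/-- The squared Wasserstein distance `W₂(μ, ν)²` between two Borel measures on `ℝ`:
the infimum over couplings of the expected squared distance. -/
def W2sq (μ ν : Measure ℝ) : ℝ≥0∞ :=
  ⨅ (π : Measure (ℝ × ℝ)) (_ : π.map Prod.fst = μ ∧ π.map Prod.snd = ν),
    ∫⁻ z, edist z.1 z.2 ^ 2 ∂π

/-- Tonelli: one-sided squared cost as an integral of measures of quadrants. -/
theorem half_cost (π : Measure (ℝ × ℝ)) [IsFiniteMeasure π] :
    ∫⁻ z, ENNReal.ofReal (z.2 - z.1) ^ 2 ∂π =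
      ∫⁻ p : ℝ × ℝ, π {z | z.1 ≤ min p.1 p.2 ∧ max p.1 p.2 < z.2} := by
  have hE : MeasurableSet {q : (ℝ × ℝ) × (ℝ × ℝ) |
      q.1.1 ≤ min q.2.1 q.2.2 ∧ max q.2.1 q.2.2 < q.1.2} := by
    have m1 : Measurable fun q : (ℝ × ℝ) × (ℝ × ℝ) => q.1.1 := by fun_prop
    have m2 : Measurable fun q : (ℝ × ℝ) × (ℝ × ℝ) => q.1.2 := by fun_prop
    have m3 : Measurable fun q : (ℝ × ℝ) × (ℝ × ℝ) => min q.2.1 q.2.2 := by fun_prop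
    have m4 : Measurable fun q : (ℝ × ℝ) × (ℝ × ℝ) => max q.2.1 q.2.2 := by fun_prop
    exact (measurableSet_le m1 m3).inter (measurableSet_lt m4 m2)
  have h1 := Measure.prod_apply (μ := π) (ν := (volume : Measure (ℝ × ℝ))) hE
  have h2 := Measure.prod_apply_symm (μ := π) (ν := (volume : Measure (ℝ × ℝ))) hE
  rw [h1] at h2
  refine Eq.trans ?_ h2
  refine lintegral_congr fun z => ?_
  have : (Prod.mk z ⁻¹' {q : (ℝ × ℝ) × (ℝ × ℝ) |
      q.1.1 ≤ min q.2.1 q.2.2 ∧ max q.2.1 q.2.2 < q.1.2}) = Ico z.1 z.2 ×ˢ Ico z.1 z.2 := by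
    ext p
    simp only [mem_preimage, mem_ofPred_eq, mem_prod, mem_Ico, le_min_iff, max_lt_iff]
    tauto
  rw [this, Measure.volume_eq_prod, Measure.prod_prod, Real.volume_Ico, sq]

theorem edist_sq (x y : ℝ) :
    edist x y ^ 2 = ENNReal.ofReal (y - x) ^ 2 + ENNReal.ofReal (x - y) ^ 2 := by
  rw [edist_dist, Real.dist_eq]
  rcases le_total x y with h | h
  · rw [abs_of_nonpos (by linarith), ENNReal.ofReal_of_nonpos (p := x - y) (by linarith)]
    simp
  · rw [abs_of_nonneg (by linarith), ENNReal.ofReal_of_nonpos (p := y - x) (by linarith)]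
    simp

/-- The comonotone coupling minimizes the measure of off-diagonal quadrants. -/
theorem quadrant_le (P : Measure ℝ) [IsFiniteMeasure P] (S : Set ℝ) (hS : ∀ᵐ x ∂P, x ∈ S)
    (u v : ℝ → ℝ) (hu : Measurable u) (hv : Measurable v)
    (hum : StrictMonoOn u S) (hvm : StrictMonoOn v S) (a b : ℝ) :
    P {x | u x ≤ a ∧ b < v x} ≤ P {x | u x ≤ a} - P {x | v x ≤ b} := by
  by_cases h : ∀ x ∈ S, u x ≤ a → v x ≤ b
  · have : P {x | u x ≤ a ∧ b < v x} = 0 := by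
      rw [measure_eq_zero_iff_ae_notMem]
      filter_upwards [hS] with x hx hx2
      exact absurd (h x hx hx2.1) (not_le.2 hx2.2)
    rw [this]
    exact zero_le
  · push Not at h
    obtain ⟨x0, hx0, hua, hvb⟩ := h
    apply ENNReal.le_sub_of_add_le_right (measure_ne_top _ _)
    rw [← measure_union _ (measurableSet_le hv measurable_const)]
    · apply measure_mono_ae
      filter_upwards [hS] with x hx hx2
      rcases hx2 with hx2 | hx2
      · exact hx2.1
      · have h1 : v x < v x0 := lt_of_le_of_lt hx2 hvb
        have h2 : x < x0 := (hvm.lt_iff_lt hx hx0).1 h1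
        exact (hum hx hx0 h2).le.trans hua
    · rw [Set.disjoint_left]
      intro x hx hx2
      exact absurd hx2 (not_le.2 hx.2)

/-- Any coupling gives at least the difference of the marginal distribution functions. -/
theorem le_quadrant (π : Measure (ℝ × ℝ)) (u v : ℝ × ℝ → ℝ) (a b : ℝ) :
    π {z | u z ≤ a} - π {z | v z ≤ b} ≤ π {z | u z ≤ a ∧ b < v z} := by
  refine le_measure_sdiff.trans (measure_mono ?_)
  intro z hz
  exact ⟨hz.1, not_le.1 hz.2⟩

theorem cost_le (P : Measure ℝ) [IsFiniteMeasure P] (S : Set ℝ) (hS : ∀ᵐ x ∂P, x ∈ S)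
    (u v : ℝ → ℝ) (hu : Measurable u) (hv : Measurable v)
    (hum : StrictMonoOn u S) (hvm : StrictMonoOn v S)
    (π : Measure (ℝ × ℝ)) (h1 : π.map Prod.fst = P.map u) (h2 : π.map Prod.snd = P.map v) :
    ∫⁻ x, ENNReal.ofReal (v x - u x) ^ 2 ∂P ≤ ∫⁻ z, ENNReal.ofReal (z.2 - z.1) ^ 2 ∂π := by
  have hfin : IsFiniteMeasure π := by
    constructor
    have := congrArg (fun m => m univ) h1
    beta_reduce at this
    rw [Measure.map_apply measurable_fst .univ, Measure.map_apply hu .univ] at this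
    simp only [preimage_univ] at this
    rw [this]
    exact measure_lt_top _ _
  have huv : Measurable fun x => (u x, v x) := hu.prodMk hv
  have e : ∫⁻ x, ENNReal.ofReal (v x - u x) ^ 2 ∂P =
      ∫⁻ z, ENNReal.ofReal (z.2 - z.1) ^ 2 ∂(P.map fun x => (u x, v x)) := by
    rw [lintegral_map (by fun_prop) huv]
  rw [e, half_cost, half_cost]
  refine lintegral_mono fun p => ?_
  have hq : MeasurableSet {z : ℝ × ℝ | z.1 ≤ min p.1 p.2 ∧ max p.1 p.2 < z.2} :=
    (measurableSet_le measurable_fst measurable_const).inter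
      (measurableSet_lt measurable_const measurable_snd)
  rw [Measure.map_apply huv hq]
  refine (quadrant_le P S hS u v hu hv hum hvm _ _).trans
    (le_trans (le_of_eq ?_) (le_quadrant π Prod.fst Prod.snd _ _))
  have a1 := congrArg (fun m => m (Iic (min p.1 p.2))) h1
  have a2 := congrArg (fun m => m (Iic (max p.1 p.2))) h2
  beta_reduce at a1 a2
  rw [Measure.map_apply measurable_fst measurableSet_Iic,
    Measure.map_apply hu measurableSet_Iic] at a1
  rw [Measure.map_apply measurable_snd measurableSet_Iic,
    Measure.map_apply hv measurableSet_Iic] at a2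
  exact congrArg₂ (· - ·) a1.symm a2.symm

/-- For a probability measure `P` on an open interval `S` with Lebesgue density `f`, and two
strictly increasing continuous bijections `θ, θ₀` from `S` onto an open interval `T`, with
finite second moments, the squared Wasserstein distance between the pushforwards is the
weighted `L²` distance: `W₂(θ_*P, (θ₀)_*P)² = ∫ (θ(x) − θ₀(x))² f(x) dx`. -/
theorem stmt16 (S T : Set ℝ) (hSopen : IsOpen S) (hSconn : S.OrdConnected)
    (hTopen : IsOpen T) (hTconn : T.OrdConnected)
    (f : ℝ → ℝ) (hfmeas : Measurable f) (hf0 : ∀ x, 0 ≤ f x)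
    (hfS : ∀ x ∉ S, f x = 0)
    (hP : IsProbabilityMeasure (volume.withDensity fun x => ENNReal.ofReal (f x)))
    (θ θ₀ : ℝ → ℝ) (hθmeas : Measurable θ) (hθ₀meas : Measurable θ₀)
    (hθmono : StrictMonoOn θ S) (hθ₀mono : StrictMonoOn θ₀ S)
    (hθcont : ContinuousOn θ S) (hθ₀cont : ContinuousOn θ₀ S)
    (hθonto : θ '' S = T) (hθ₀onto : θ₀ '' S = T)
    (hθmom : Integrable fun x => θ x ^ 2 * f x)
    (hθ₀mom : Integrable fun x => θ₀ x ^ 2 * f x) :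
    W2sq ((volume.withDensity fun x => ENNReal.ofReal (f x)).map θ)
        ((volume.withDensity fun x => ENNReal.ofReal (f x)).map θ₀) =
      ENNReal.ofReal (∫ x, (θ x - θ₀ x) ^ 2 * f x) := by
  set P := volume.withDensity fun x => ENNReal.ofReal (f x) with hPdef
  have hfm : Measurable fun x => ENNReal.ofReal (f x) := by fun_prop
  have hS : ∀ᵐ x ∂P, x ∈ S := by
    rw [hPdef, ae_withDensity_iff hfm]
    refine Filter.Eventually.of_forall fun x hx => ?_
    by_contra h
    exact hx (by rw [hfS x h, ENNReal.ofReal_zero])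
  have hval : ENNReal.ofReal (∫ x, (θ x - θ₀ x) ^ 2 * f x) =
      ∫⁻ x, edist (θ x) (θ₀ x) ^ 2 ∂P := by
    have hint : Integrable fun x => (θ x - θ₀ x) ^ 2 * f x := by
      refine ((hθmom.const_mul 2).add (hθ₀mom.const_mul 2)).mono' (by fun_prop) ?_
      refine Filter.Eventually.of_forall fun x => ?_
      have h0 := hf0 x
      rw [Real.norm_of_nonneg (by positivity)]
      simp only [Pi.add_apply]
      nlinarith [mul_nonneg (sq_nonneg (θ x + θ₀ x)) h0]
    rw [ofReal_integral_eq_lintegral_ofReal hint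
      (Filter.Eventually.of_forall fun x => mul_nonneg (sq_nonneg _) (hf0 x)), hPdef,
      lintegral_withDensity_eq_lintegral_mul _ hfm (by fun_prop)]
    refine lintegral_congr fun x => ?_
    simp only [Pi.mul_apply]
    rw [edist_dist, Real.dist_eq, ← ENNReal.ofReal_pow (abs_nonneg _), sq_abs, mul_comm,
      ENNReal.ofReal_mul (hf0 x)]
  rw [hval]
  have hpair : Measurable fun x => (θ x, θ₀ x) := hθmeas.prodMk hθ₀meas
  apply le_antisymm
  · have hc : (P.map fun x => (θ x, θ₀ x)).map Prod.fst = P.map θ ∧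
        (P.map fun x => (θ x, θ₀ x)).map Prod.snd = P.map θ₀ := by
      constructor
      · rw [Measure.map_map measurable_fst hpair]; rfl
      · rw [Measure.map_map measurable_snd hpair]; rfl
    refine (iInf₂_le (P.map fun x => (θ x, θ₀ x)) hc).trans (le_of_eq ?_)
    rw [lintegral_map (by fun_prop) hpair]
  · refine le_iInf₂ fun π hπ => ?_
    simp only [edist_sq]
    rw [lintegral_add_left (by fun_prop), lintegral_add_left (by fun_prop)]
    refine add_le_add
      (cost_le P S hS θ θ₀ hθmeas hθ₀meas hθmono hθ₀mono π hπ.1 hπ.2) ?_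
    have hsw := cost_le P S hS θ₀ θ hθ₀meas hθmeas hθ₀mono hθmono (π.map Prod.swap)
      (by rw [Measure.map_map measurable_fst measurable_swap]; exact hπ.2)
      (by rw [Measure.map_map measurable_snd measurable_swap]; exact hπ.1)
    rw [lintegral_map (by fun_prop) measurable_swap] at hsw
    exact hsw

end Stmt16
end
end
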